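/- For every integer n ≥ 2 the quantum exchange relation B[n+1,0,0,n]·B[n−1,0,0,n−2] = q² · B[n,0,0,n−1]² + q^{2n²−6n+8} p₁^{n+1} p₀^{n−2} holds. -/

import Mathlib

noncomputable section

abbrev F : Type := RatFunc ℚ

/-- The deformation parameter `q`. -/
def qq : F := RatFunc.X

/-- The quantum integer `[3] = q² + 1 + q⁻²`. -/
def box3 : F := qq ^ 2 + 1 + (qq⁻¹) ^ 2

/-- The generators `E₁, E₂` of the free algebra. -/
def gen (i : Fin 2) : FreeAlgebra F (Fin 2) := FreeAlgebra.ι F i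

/-- The quantized Serre relations. -/
inductive SerreRel : FreeAlgebra F (Fin 2) → FreeAlgebra F (Fin 2) → Prop
  | rel1 : SerreRel
      (gen 0 ^ 3 * gen 1 - box3 • (gen 0 ^ 2 * gen 1 * gen 0)
        + box3 • (gen 0 * gen 1 * gen 0 ^ 2) - gen 1 * gen 0 ^ 3) 0
  | rel2 : SerreRel
      (gen 1 ^ 3 * gen 0 - box3 • (gen 1 ^ 2 * gen 0 * gen 1)
        + box3 • (gen 1 * gen 0 * gen 1 ^ 2) - gen 0 * gen 1 ^ 3) 0

/-- `U = U_q(𝔫)`, the free algebra on `E₁, E₂` modulo the quantized Serre relations. -/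
abbrev U : Type := RingQuot SerreRel

def E1 : U := RingQuot.mkAlgHom F SerreRel (gen 0)
def E2 : U := RingQuot.mkAlgHom F SerreRel (gen 1)

/-- `A = (1/(q+q⁻¹))(E₂E₁ − q⁻²E₁E₂)`. -/
def Aelt : U := (qq + qq⁻¹)⁻¹ • (E2 * E1 - (qq⁻¹) ^ 2 • (E1 * E2))

def v0 : U := E1
def v1 : U := Aelt * v0 - v0 * Aelt
def v2 : U := Aelt * v1 - v1 * Aelt
def v3 : U := Aelt * v2 - v2 * Aelt

/-- `uᵢ = (1 − q⁻²)⁻²ⁱ vᵢ`. -/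
def u0 : U := v0
def u1 : U := ((1 - (qq⁻¹) ^ 2)⁻¹) ^ 2 • v1
def u2 : U := ((1 - (qq⁻¹) ^ 2)⁻¹) ^ 4 • v2
def u3 : U := ((1 - (qq⁻¹) ^ 2)⁻¹) ^ 6 • v3

/-- `p₁ = u₃u₁ − q²u₂²`. -/
def p1 : U := u3 * u1 - qq ^ 2 • u2 ^ 2
/-- `p₀ = u₂u₀ − q²u₁²`. -/
def p0 : U := u2 * u0 - qq ^ 2 • u1 ^ 2

/-- `S`, the subalgebra of `U` generated by `u₀, u₁, u₂, u₃`. -/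
abbrev Sgen : Subalgebra F U := Algebra.adjoin F ({u0, u1, u2, u3} : Set U)

def us0 : Sgen := ⟨u0, Algebra.subset_adjoin (by simp)⟩
def us1 : Sgen := ⟨u1, Algebra.subset_adjoin (by simp)⟩
def us2 : Sgen := ⟨u2, Algebra.subset_adjoin (by simp)⟩
def us3 : Sgen := ⟨u3, Algebra.subset_adjoin (by simp)⟩

/-- `p₁ = u₃u₁ − q²u₂²` as an element of `S`. -/
def ps1 : Sgen := us3 * us1 - qq ^ 2 • us2 ^ 2
/-- `p₀ = u₂u₀ − q²u₁²` as an element of `S`. -/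
def ps0 : Sgen := us2 * us0 - qq ^ 2 • us1 ^ 2

/-- Index quadruples `a = (a₃, a₂, a₁, a₀)`. -/
abbrev Idx : Type := ℕ × ℕ × ℕ × ℕ

/-- The PBW monomial `u₃^{a₃}u₂^{a₂}u₁^{a₁}u₀^{a₀}`. -/
def mon (a : Idx) : Sgen := us3 ^ a.1 * us2 ^ a.2.1 * us1 ^ a.2.2.1 * us0 ^ a.2.2.2

/-- `b(a) = C(a₃,2)+C(a₂,2)+C(a₁,2)+C(a₀,2)`. -/
def bexp (a : Idx) : ℕ :=
  Nat.choose a.1 2 + Nat.choose a.2.1 2 + Nat.choose a.2.2.1 2 + Nat.choose a.2.2.2 2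

/-- The dual PBW basis element `E[a] = q^{b(a)} u₃^{a₃}u₂^{a₂}u₁^{a₁}u₀^{a₀}`. -/
def Ee (a : Idx) : Sgen := qq ^ bexp a • mon a

/-- `N(a) = (a₃+a₂+a₁+a₀)² − 7a₃ − 5a₂ − 3a₁ − a₀`. -/
def Nnum (a : Idx) : ℤ :=
  ((a.1 : ℤ) + a.2.1 + a.2.2.1 + a.2.2.2) ^ 2
    - 7 * a.1 - 5 * a.2.1 - 3 * a.2.2.1 - a.2.2.2

/-- `a ⊴ b` iff `b − a ∈ ℕ·(−1,2,−1,0) + ℕ·(0,−1,2,−1)`. -/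
def tri (a b : Idx) : Prop :=
  ∃ s r : ℕ,
    (b.1 : ℤ) = a.1 - s ∧
    (b.2.1 : ℤ) = a.2.1 + 2 * s - r ∧
    (b.2.2.1 : ℤ) = a.2.2.1 - s + 2 * r ∧
    (b.2.2.2 : ℤ) = a.2.2.2 - r

/-- `S(a) = {b ∈ ℕ⁴ : a ⊴ b and a ≠ b}`. -/
def Sset (a : Idx) : Set Idx := {b | tri a b ∧ a ≠ b}

/-- Condition (i): `B[a] − E[a] ∈ Σ_{b ∈ S(a)} qℤ[q]·E[b]`. -/
def cond1 (B : Idx → Sgen) (a : Idx) : Prop :=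
  ∃ φ : Idx →₀ Polynomial ℤ,
    (↑φ.support : Set Idx) ⊆ Sset a ∧
    B a - Ee a =
      φ.sum fun b p => (qq * Polynomial.eval₂ (Int.castRingHom F) qq p) • Ee b

/-- Hypotheses on the bar involution of coefficients `bar : q ↦ q⁻¹` and on the
anti-automorphism `σ` of `S`: `σ` is an additive, anti-multiplicative bijection with
`σ(c(q)·x) = c(q⁻¹)·σ(x)` and `σ(uᵢ) = q^{2i}uᵢ`. -/
def SigmaHyp (bar : F →+* F) (σ : Sgen → Sgen) : Prop :=
  bar qq = qq⁻¹ ∧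
  Function.Bijective σ ∧
  (∀ x y : Sgen, σ (x + y) = σ x + σ y) ∧
  (∀ x y : Sgen, σ (x * y) = σ y * σ x) ∧
  (∀ (c : F) (x : Sgen), σ (c • x) = bar c • σ x) ∧
  σ us0 = us0 ∧ σ us1 = qq ^ 2 • us1 ∧ σ us2 = qq ^ 4 • us2 ∧ σ us3 = qq ^ 6 • us3

/-- The defining properties of the dual canonical basis `B`: for every `a ∈ ℕ⁴`,
`B[a] − E[a] ∈ Σ_{b ∈ S(a)} qℤ[q]·E[b]` and `σ(B[a]) = q^{−N(a)}B[a]`. -/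
def DCB (bar : F →+* F) (σ : Sgen → Sgen) (B : Idx → Sgen) : Prop :=
  ∀ a : Idx, cond1 B a ∧ σ (B a) = qq ^ (-Nnum a) • B a

/-- Extension of `B` to integer quadruples by the convention that `B[a] = 0` whenever
some coordinate of `a` is negative. -/
def Bz (B : Idx → Sgen) (a : ℤ × ℤ × ℤ × ℤ) : Sgen :=
  if 0 ≤ a.1 ∧ 0 ≤ a.2.1 ∧ 0 ≤ a.2.2.1 ∧ 0 ≤ a.2.2.2 then
    B (a.1.toNat, a.2.1.toNat, a.2.2.1.toNat, a.2.2.2.toNat)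
  else 0

set_option linter.unusedSimpArgs false
section part1
variable {K : Type*} [Field K] {R : Type*} [Ring R] [Algebra K R]

theorem p1_R0 (t : K) (ht : t ≠ 0) (a b A w : R)
    (hr : a ^ 3 * b - (t + 1 + t⁻¹) • (a ^ 2 * b * a) + (t + 1 + t⁻¹) • (a * b * a ^ 2)
      - b * a ^ 3 = 0)
    (hA : A = b * a - t⁻¹ • (a * b)) (hw : w = A * a - a * A) :
    w * a = t • (a * w) := by
  subst hw hA
  have h2 : ∀ x : R, x ^ 2 = x * x := fun x => pow_two x
  have h3 : ∀ x : R, x ^ 3 = x * (x * x) := fun x => by rw [pow_succ', pow_two]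
  rw [← sub_eq_zero]
  rw [← neg_eq_zero] at hr
  refine Eq.trans ?_ hr
  simp only [h2, h3, mul_sub, sub_mul, smul_mul_assoc, mul_smul_comm, smul_sub, smul_smul, mul_assoc]
  match_scalars <;> field_simp <;> ring

theorem p1_A2 (t : K) (ht : t ≠ 0) (hb : t + 1 + t⁻¹ ≠ 0) (a b A w A2 : R)
    (hr : a ^ 3 * b - (t + 1 + t⁻¹) • (a ^ 2 * b * a) + (t + 1 + t⁻¹) • (a * b * a ^ 2)
      - b * a ^ 3 = 0)
    (hs : b ^ 3 * a - (t + 1 + t⁻¹) • (b ^ 2 * a * b) + (t + 1 + t⁻¹) • (b * a * b ^ 2)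
      - a * b ^ 3 = 0)
    (hA : A = b * a - t⁻¹ • (a * b)) (hw : w = A * a - a * A)
    (h2 : A2 = b * w - t⁻¹ • (w * b)) :
    A * A2 = A2 * A := by
  have key : (t + 1 + t⁻¹) • (A * A2 - A2 * A) = 0 := by
    obtain ⟨ρ, hρ⟩ : ∃ ρ, ρ = a ^ 3 * b - (t + 1 + t⁻¹) • (a ^ 2 * b * a)
      + (t + 1 + t⁻¹) • (a * b * a ^ 2) - b * a ^ 3 := ⟨_, rfl⟩
    obtain ⟨τ, hτ⟩ : ∃ τ, τ = b ^ 3 * a - (t + 1 + t⁻¹) • (b ^ 2 * a * b)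
      + (t + 1 + t⁻¹) • (b * a * b ^ 2) - a * b ^ 3 := ⟨_, rfl⟩
    have : (t + 1 + t⁻¹) • (A * A2 - A2 * A) = b * (b * ρ) - ((1 + t) * t⁻¹ * t⁻¹) • (b * (ρ * b))
        + (t⁻¹ * t⁻¹ * t⁻¹) • (ρ * (b * b))
        + (t⁻¹ * t⁻¹ * t⁻¹) • (a * (a * τ)) - ((1 + t) * t⁻¹ * t⁻¹) • (a * (τ * a))
        + τ * (a * a) := by
      subst h2 hw hA hρ hτ
      have h2 : ∀ x : R, x ^ 2 = x * x := fun x => pow_two x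
      have h3 : ∀ x : R, x ^ 3 = x * (x * x) := fun x => by rw [pow_succ', pow_two]
      simp only [h2, h3, mul_sub, sub_mul, mul_add, add_mul, smul_mul_assoc, mul_smul_comm,
        smul_sub, smul_add, smul_smul, mul_assoc]
      match_scalars <;> field_simp <;> ring
    rw [this, hρ, hτ, hr, hs]
    simp
  rw [smul_eq_zero] at key
  rcases key with h | h
  · exact absurd h hb
  · exact sub_eq_zero.1 h

/-- the commutators with `A2`. -/
theorem p1_A2v0 (t : K) (ht : t ≠ 0) (a b A w A2 : R)
    (hA : A = b * a - t⁻¹ • (a * b))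
    (h2 : A2 = b * w - t⁻¹ • (w * b)) (h0 : w * a = t • (a * w)) :
    A2 * a - a * A2 = t • (A * w) - t⁻¹ • (w * A) := by
  have h1 : b * (w * a) = b * (t • (a * w)) := by rw [h0]
  have h3 : (w * a) * b = (t • (a * w)) * b := by rw [h0]
  subst h2 hA
  simp only [mul_sub, sub_mul, mul_add, add_mul, smul_mul_assoc, mul_smul_comm,
        smul_sub, smul_add, smul_smul, mul_assoc] at h1 h3 ⊢
  rw [h1]
  rw [← sub_eq_zero] at h3 ⊢
  refine Eq.trans ?_ ((congrArg (fun x => (-(t⁻¹*t⁻¹)) • x) h3).trans (smul_zero _))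
  simp only [mul_sub, sub_mul, mul_add, add_mul, smul_mul_assoc, mul_smul_comm,
        smul_sub, smul_add, smul_smul, mul_assoc]
  match_scalars <;> field_simp <;> ring

/-- shift of a commutator with `A2`. -/
theorem p1_shift (t : K) (A A2 x x' x'' : R) (hc : A * A2 = A2 * A)
    (hx : x' = A * x - x * A) (hx' : x'' = A * x' - x' * A)
    (h : A2 * x - x * A2 = t • (A * x') - t⁻¹ • (x' * A)) :
    A2 * x' - x' * A2 = t • (A * x'') - t⁻¹ • (x'' * A) := by
  have e : A2 * x' - x' * A2 = A * (A2 * x - x * A2) - (A2 * x - x * A2) * A := by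
    subst hx
    simp only [mul_sub, sub_mul]
    have e1 : A2 * (A * x) = A * (A2 * x) := by rw [← mul_assoc, ← hc, mul_assoc]
    have e2 : A2 * (x * A) = A2 * x * A := by rw [mul_assoc]
    have e3 : A * x * A2 = A * (x * A2) := by rw [mul_assoc]
    have e4 : x * A * A2 = x * A2 * A := by rw [mul_assoc, hc, mul_assoc]
    rw [e1, e2, e3, e4]
    abel
  rw [e, h, hx']
  simp only [mul_sub, sub_mul, smul_mul_assoc, mul_smul_comm, smul_sub, smul_smul, mul_assoc]
  abel

theorem p1_der (t : K) (A x y x' y' : R) (hx : x' = A * x - x * A) (hy : y' = A * y - y * A)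
    (h : y * x = t • (x * y)) : y' * x + y * x' = t • (x' * y + x * y') := by
  have h1 : A * (y * x) = A * (t • (x * y)) := by rw [h]
  have h2 : (y * x) * A = (t • (x * y)) * A := by rw [h]
  subst hx hy
  simp only [mul_sub, sub_mul, smul_mul_assoc, mul_smul_comm, smul_sub, smul_add, mul_assoc] at h1 h2 ⊢
  rw [h1, h2]
  abel

/-- the key induction step. -/
theorem p1_step (t : K) (ht : t ≠ 0) (hb : t + t⁻¹ ≠ 0) (A A2 x y z w : R)
    (hx : y = A * x - x * A) (hy : z = A * y - y * A) (hz : w = A * z - z * A)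
    (hA : A2 * x - x * A2 = t • (A * y) - t⁻¹ • (y * A))
    (hA' : A2 * y - y * A2 = t • (A * z) - t⁻¹ • (z * A))
    (h : y * x = t • (x * y)) : z * y = t • (y * z) ∧
      z * x - t • (x * z) = (t - 1) • (y * y) := by
  have d1 : z * x + y * y = t • (y * y + x * z) := p1_der t A x y y z hx hy h
  refine ⟨?_, ?_⟩
  swap
  · rw [smul_add] at d1
    rw [sub_smul, one_smul]
    have := eq_sub_of_add_eq d1
    rw [this]; abel
  have dy : A * x = y + x * A := by rw [hx]; abel
  have dz : A * y = z + y * A := by rw [hy]; abel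
  have dw : A * z = w + z * A := by rw [hz]; abel
  have ax : A2 * x = x * A2 + (t • (A * y) - t⁻¹ • (y * A)) := by rw [← hA]; abel
  have ay : A2 * y = y * A2 + (t • (A * z) - t⁻¹ • (z * A)) := by rw [← hA']; abel
  -- second derivative
  have d2 : A * (z * x + y * y) - (z * x + y * y) * A
     = A * (t • (y * y + x * z)) - (t • (y * y + x * z)) * A := by rw [d1]
  -- A2
  have d3 : A2 * (y * x) - y * x * A2 = A2 * (t • (x * y)) - (t • (x * y)) * A2 := by rw [h]
  have d4 : (z * x + y * y) * A = (t • (y * y + x * z)) * A := by rw [d1]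
  have c1 : ∀ s, A * (x * s) = y * s + x * (A * s) := fun s => by
    rw [← mul_assoc, dy, add_mul, mul_assoc]
  have c2 : ∀ s, A * (y * s) = z * s + y * (A * s) := fun s => by
    rw [← mul_assoc, dz, add_mul, mul_assoc]
  have c3 : ∀ s, A * (z * s) = w * s + z * (A * s) := fun s => by
    rw [← mul_assoc, dw, add_mul, mul_assoc]
  have c4 : ∀ s, A2 * (x * s) = x * (A2 * s) + (t • (A * (y * s)) - t⁻¹ • (y * (A * s))) := fun s => by
    rw [← mul_assoc, ax]; simp only [add_mul, sub_mul, smul_mul_assoc, mul_assoc]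
  have c5 : ∀ s, A2 * (y * s) = y * (A2 * s) + (t • (A * (z * s)) - t⁻¹ • (z * (A * s))) := fun s => by
    rw [← mul_assoc, ay]; simp only [add_mul, sub_mul, smul_mul_assoc, mul_assoc]
  have key : (t + t⁻¹) • (z * y - t • (y * z)) = 0 := by
    clear hx hy hz hA hA' h d1
    simp only [c1, c2, c3, c4, c5, ax, ay, dy, dz, dw, mul_sub, sub_mul, mul_add, add_mul,
      smul_mul_assoc, mul_smul_comm, smul_sub, smul_add, smul_smul, mul_assoc] at d2 d3 d4
    clear c1 c2 c3 c4 c5 ax ay dy dz dw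
    rw [← sub_eq_zero] at d2 d3 d4
    have e2 := congrArg (fun r => t • r) d2
    have e4 := congrArg (fun r => (t - t⁻¹) • r) d4
    have e := congrArg₂ (fun r s => r - s) (congrArg₂ (fun r s => r + s) e2 e4) d3
    simp only [smul_zero, add_zero, sub_zero] at e
    refine Eq.trans ?_ e
    match_scalars <;> field_simp <;> ring
  rw [smul_eq_zero] at key
  rcases key with h | h
  · exact absurd h hb
  · exact sub_eq_zero.1 h
end part1

section part2
variable {K : Type*} [Field K] {R : Type*} [Ring R] [Algebra K R]

structure KRel (t : K) (u0 u1 u2 u3 : R) : Prop where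
  r01 : u0 * u1 = t⁻¹ • (u1 * u0)
  r12 : u1 * u2 = t⁻¹ • (u2 * u1)
  r23 : u2 * u3 = t⁻¹ • (u3 * u2)
  r02 : u0 * u2 = t⁻¹ • (u2 * u0) - (1 - t⁻¹) • (u1 * u1)
  r13 : u1 * u3 = t⁻¹ • (u3 * u1) - (1 - t⁻¹) • (u2 * u2)
  r03 : u0 * u3 = t⁻¹ • (u3 * u0) - (1 - t⁻¹ * t⁻¹) • (u2 * u1)

theorem KRel.of_serre (t : K) (ht : t ≠ 0) (hb : t + 1 + t⁻¹ ≠ 0) (hb' : t + t⁻¹ ≠ 0)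
    (a b A w1 w2 w3 : R)
    (hr : a ^ 3 * b - (t + 1 + t⁻¹) • (a ^ 2 * b * a) + (t + 1 + t⁻¹) • (a * b * a ^ 2)
      - b * a ^ 3 = 0)
    (hs : b ^ 3 * a - (t + 1 + t⁻¹) • (b ^ 2 * a * b) + (t + 1 + t⁻¹) • (b * a * b ^ 2)
      - a * b ^ 3 = 0)
    (hA : A = b * a - t⁻¹ • (a * b)) (h1 : w1 = A * a - a * A) (h2 : w2 = A * w1 - w1 * A)
    (h3 : w3 = A * w2 - w2 * A) (k : K) : KRel t a (k • w1) (k ^ 2 • w2) (k ^ 3 • w3) := by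
  obtain ⟨A2, hA2⟩ : ∃ A2, A2 = b * w1 - t⁻¹ • (w1 * b) := ⟨_, rfl⟩
  have hc := p1_A2 t ht hb a b A w1 A2 hr hs hA h1 hA2
  have e0 := p1_R0 t ht a b A w1 hr hA h1
  have f0 := p1_A2v0 t ht a b A w1 A2 hA hA2 e0
  have f1 := p1_shift t A A2 a w1 w2 hc h1 h2 f0
  have f2 := p1_shift t A A2 w1 w2 w3 hc h2 h3 f1
  obtain ⟨e1, g0⟩ := p1_step t ht hb' A A2 a w1 w2 w3 h1 h2 h3 f0 f1 e0
  obtain ⟨e2, g1⟩ := p1_step t ht hb' A A2 w1 w2 w3 _ h2 h3 rfl f1 f2 e1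
  have g : w3 * a = t • (a * w3) + (t * t - 1) • (w1 * w2) := by
    have d1 : A * (w2 * a - t • (a * w2)) - (w2 * a - t • (a * w2)) * A
      = A * ((t - 1) • (w1 * w1)) - ((t - 1) • (w1 * w1)) * A := by rw [g0]
    have l : A * (w2 * a - t • (a * w2)) - (w2 * a - t • (a * w2)) * A
      = w3 * a + w2 * w1 - t • (w1 * w2 + a * w3) := by
      rw [h3, h1]
      simp only [mul_sub, sub_mul, smul_mul_assoc, mul_smul_comm, smul_sub, smul_add, mul_assoc]
      abel
    have r : A * ((t - 1) • (w1 * w1)) - ((t - 1) • (w1 * w1)) * A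
      = (t - 1) • (w2 * w1 + w1 * w2) := by
      rw [h2]
      simp only [mul_sub, sub_mul, smul_mul_assoc, mul_smul_comm, smul_sub, smul_add, mul_assoc]
      abel
    rw [l, r, e1] at d1
    rw [← sub_eq_zero] at d1 ⊢
    refine Eq.trans ?_ d1
    match_scalars <;> ring
  have q01 : a * w1 = t⁻¹ • (w1 * a) := by rw [e0, smul_smul, inv_mul_cancel₀ ht, one_smul]
  have q12 : w1 * w2 = t⁻¹ • (w2 * w1) := by rw [e1, smul_smul, inv_mul_cancel₀ ht, one_smul]
  have q23 : w2 * w3 = t⁻¹ • (w3 * w2) := by rw [e2, smul_smul, inv_mul_cancel₀ ht, one_smul]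
  have q02 : a * w2 = t⁻¹ • (w2 * a) - (1 - t⁻¹) • (w1 * w1) := by
    rw [sub_eq_iff_eq_add] at g0
    rw [g0]
    match_scalars <;> field_simp <;> ring
  have q13 : w1 * w3 = t⁻¹ • (w3 * w1) - (1 - t⁻¹) • (w2 * w2) := by
    rw [sub_eq_iff_eq_add] at g1
    rw [g1]
    match_scalars <;> field_simp <;> ring
  have q03 : a * w3 = t⁻¹ • (w3 * a) - (1 - t⁻¹ * t⁻¹) • (w2 * w1) := by
    rw [g, e1]
    match_scalars <;> field_simp <;> ring
  constructor <;>
  simp only [smul_mul_assoc, mul_smul_comm, smul_smul, q01, q12, q23, q02, q13, q03, smul_sub] <;>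
  match_scalars <;> ring

variable {t : K} {u0 u1 u2 u3 : R}

theorem KRel.p1_u (ht : t ≠ 0) (h : KRel t u0 u1 u2 u3) {p1 : R}
    (h1 : p1 = u3 * u1 - t • (u2 * u2)) :
    p1 * u0 = t ^ 2 • (u0 * p1) ∧ p1 * u1 = t • (u1 * p1) ∧ p1 * u2 = u2 * p1 ∧
    p1 * u3 = t⁻¹ • (u3 * p1) := by
  obtain ⟨r01, r12, r23, r02, r13, r03⟩ := h
  have a01 : ∀ s, u0 * (u1 * s) = t⁻¹ • (u1 * (u0 * s)) := fun s => by
    rw [← mul_assoc, r01, smul_mul_assoc, mul_assoc]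
  have a12 : ∀ s, u1 * (u2 * s) = t⁻¹ • (u2 * (u1 * s)) := fun s => by
    rw [← mul_assoc, r12, smul_mul_assoc, mul_assoc]
  have a23 : ∀ s, u2 * (u3 * s) = t⁻¹ • (u3 * (u2 * s)) := fun s => by
    rw [← mul_assoc, r23, smul_mul_assoc, mul_assoc]
  have a02 : ∀ s, u0 * (u2 * s) = t⁻¹ • (u2 * (u0 * s)) - (1 - t⁻¹) • (u1 * (u1 * s)) := fun s => by
    rw [← mul_assoc, r02]; simp only [sub_mul, smul_mul_assoc, mul_assoc]
  have a13 : ∀ s, u1 * (u3 * s) = t⁻¹ • (u3 * (u1 * s)) - (1 - t⁻¹) • (u2 * (u2 * s)) := fun s => by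
    rw [← mul_assoc, r13]; simp only [sub_mul, smul_mul_assoc, mul_assoc]
  have a03 : ∀ s, u0 * (u3 * s) = t⁻¹ • (u3 * (u0 * s)) - (1 - t⁻¹ * t⁻¹) • (u2 * (u1 * s)) :=
    fun s => by
    rw [← mul_assoc, r03]; simp only [sub_mul, smul_mul_assoc, mul_assoc]
  subst h1
  refine ⟨?_, ?_, ?_, ?_⟩ <;>
  simp only [mul_sub, sub_mul, smul_mul_assoc, mul_smul_comm, smul_sub, smul_smul, mul_assoc,
    a01, a12, a23, a02, a13, a03, r01, r12, r23, r02, r13, r03] <;>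
  match_scalars <;> field_simp <;> ring

theorem KRel.p0_u (ht : t ≠ 0) (h : KRel t u0 u1 u2 u3) {p0 : R}
    (h1 : p0 = u2 * u0 - t • (u1 * u1)) :
    p0 * u0 = t • (u0 * p0) ∧ p0 * u1 = u1 * p0 ∧ p0 * u2 = t⁻¹ • (u2 * p0) ∧
    p0 * u3 = (t⁻¹) ^ 2 • (u3 * p0) := by
  obtain ⟨r01, r12, r23, r02, r13, r03⟩ := h
  have a01 : ∀ s, u0 * (u1 * s) = t⁻¹ • (u1 * (u0 * s)) := fun s => by
    rw [← mul_assoc, r01, smul_mul_assoc, mul_assoc]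
  have a12 : ∀ s, u1 * (u2 * s) = t⁻¹ • (u2 * (u1 * s)) := fun s => by
    rw [← mul_assoc, r12, smul_mul_assoc, mul_assoc]
  have a23 : ∀ s, u2 * (u3 * s) = t⁻¹ • (u3 * (u2 * s)) := fun s => by
    rw [← mul_assoc, r23, smul_mul_assoc, mul_assoc]
  have a02 : ∀ s, u0 * (u2 * s) = t⁻¹ • (u2 * (u0 * s)) - (1 - t⁻¹) • (u1 * (u1 * s)) := fun s => by
    rw [← mul_assoc, r02]; simp only [sub_mul, smul_mul_assoc, mul_assoc]
  have a13 : ∀ s, u1 * (u3 * s) = t⁻¹ • (u3 * (u1 * s)) - (1 - t⁻¹) • (u2 * (u2 * s)) := fun s => by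
    rw [← mul_assoc, r13]; simp only [sub_mul, smul_mul_assoc, mul_assoc]
  have a03 : ∀ s, u0 * (u3 * s) = t⁻¹ • (u3 * (u0 * s)) - (1 - t⁻¹ * t⁻¹) • (u2 * (u1 * s)) :=
    fun s => by
    rw [← mul_assoc, r03]; simp only [sub_mul, smul_mul_assoc, mul_assoc]
  subst h1
  refine ⟨?_, ?_, ?_, ?_⟩ <;>
  simp only [mul_sub, sub_mul, smul_mul_assoc, mul_smul_comm, smul_sub, smul_smul, mul_assoc,
    a01, a12, a23, a02, a13, a03, r01, r12, r23, r02, r13, r03] <;>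
  match_scalars <;> field_simp <;> ring

theorem KRel.ids (ht : t ≠ 0) (h : KRel t u0 u1 u2 u3) {p0 p1 z : R}
    (hp0 : p0 = u2 * u0 - t • (u1 * u1)) (hp1 : p1 = u3 * u1 - t • (u2 * u2))
    (hz : z = u3 * u0 - t • (u2 * u1)) :
    u3 * z - t • (z * u3) = (t - 1) • (u2 * p1) ∧
    t ^ 2 • (z * u2) - t • (u2 * z) = (t - 1) • (u3 * p0) ∧
    t • (z * u2) - p1 * u1 = u3 * p0 ∧
    (u3 * z - t • (u2 * p1)) * u2 - t⁻¹ • (u3 * (u3 * p0)) = p1 * p1 := by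
  obtain ⟨r01, r12, r23, r02, r13, r03⟩ := h
  have a01 : ∀ s, u0 * (u1 * s) = t⁻¹ • (u1 * (u0 * s)) := fun s => by
    rw [← mul_assoc, r01, smul_mul_assoc, mul_assoc]
  have a12 : ∀ s, u1 * (u2 * s) = t⁻¹ • (u2 * (u1 * s)) := fun s => by
    rw [← mul_assoc, r12, smul_mul_assoc, mul_assoc]
  have a23 : ∀ s, u2 * (u3 * s) = t⁻¹ • (u3 * (u2 * s)) := fun s => by
    rw [← mul_assoc, r23, smul_mul_assoc, mul_assoc]
  have a02 : ∀ s, u0 * (u2 * s) = t⁻¹ • (u2 * (u0 * s)) - (1 - t⁻¹) • (u1 * (u1 * s)) := fun s => by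
    rw [← mul_assoc, r02]; simp only [sub_mul, smul_mul_assoc, mul_assoc]
  have a13 : ∀ s, u1 * (u3 * s) = t⁻¹ • (u3 * (u1 * s)) - (1 - t⁻¹) • (u2 * (u2 * s)) := fun s => by
    rw [← mul_assoc, r13]; simp only [sub_mul, smul_mul_assoc, mul_assoc]
  have a03 : ∀ s, u0 * (u3 * s) = t⁻¹ • (u3 * (u0 * s)) - (1 - t⁻¹ * t⁻¹) • (u2 * (u1 * s)) :=
    fun s => by
    rw [← mul_assoc, r03]; simp only [sub_mul, smul_mul_assoc, mul_assoc]
  subst hp0 hp1 hz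
  refine ⟨?_, ?_, ?_, ?_⟩ <;>
  simp only [mul_sub, sub_mul, smul_mul_assoc, mul_smul_comm, smul_sub, smul_smul, mul_assoc,
    a01, a12, a23, a02, a13, a03, r01, r12, r23, r02, r13, r03] <;>
  match_scalars <;> field_simp <;> ring

end part2

section part3
variable {K : Type*} [Field K] {R : Type*} [Ring R] [Algebra K R]

structure KSys (t : K) (u0 u1 u2 u3 p0 p1 z d : R) : Prop where
  ht : t ≠ 0
  hz : z = u3 * u0 - t • (u2 * u1)
  hp0 : p0 = u2 * u0 - t • (u1 * u1)
  hd : d = t⁻¹ • (p1 * p0)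
  hd' : d = t • (p0 * p1)
  p1u0 : p1 * u0 = t ^ 2 • (u0 * p1)
  p1u1 : p1 * u1 = t • (u1 * p1)
  p1u2 : p1 * u2 = u2 * p1
  p1u3 : p1 * u3 = t⁻¹ • (u3 * p1)
  p0u0 : p0 * u0 = t • (u0 * p0)
  p0u1 : p0 * u1 = u1 * p0
  p0u2 : p0 * u2 = t⁻¹ • (u2 * p0)
  p0u3 : p0 * u3 = (t⁻¹) ^ 2 • (u3 * p0)
  p1z : p1 * z = t • (z * p1)
  p1p0 : p1 * p0 = t ^ 2 • (p0 * p1)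
  dz : d * z = z * d
  du3 : d * u3 = (t⁻¹) ^ 3 • (u3 * d)
  du2 : d * u2 = t⁻¹ • (u2 * d)
  dp1 : d * p1 = (t⁻¹) ^ 2 • (p1 * d)
  i1 : u3 * z - t • (z * u3) = (t - 1) • (u2 * p1)
  i2 : t ^ 2 • (z * u2) - t • (u2 * z) = (t - 1) • (u3 * p0)
  i3 : t • (z * u2) - p1 * u1 = u3 * p0
  i4 : (u3 * z - t • (u2 * p1)) * u2 - t⁻¹ • (u3 * (u3 * p0)) = p1 * p1

theorem KRel.sys {t : K} {u0 u1 u2 u3 : R} (ht : t ≠ 0) (h : KRel t u0 u1 u2 u3) {p0 p1 z d : R}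
    (hp0 : p0 = u2 * u0 - t • (u1 * u1)) (hp1 : p1 = u3 * u1 - t • (u2 * u2))
    (hz : z = u3 * u0 - t • (u2 * u1)) (hd : d = t⁻¹ • (p1 * p0)) :
    KSys t u0 u1 u2 u3 p0 p1 z d := by
  obtain ⟨i1, i2, i3, i4⟩ := h.ids ht hp0 hp1 hz
  obtain ⟨p1u0, p1u1, p1u2, p1u3⟩ := h.p1_u ht hp1
  obtain ⟨p0u0, p0u1, p0u2, p0u3⟩ := h.p0_u ht hp0
  have b0 : ∀ s, p1 * (u0 * s) = t ^ 2 • (u0 * (p1 * s)) := fun s => by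
    rw [← mul_assoc, p1u0, smul_mul_assoc, mul_assoc]
  have b1 : ∀ s, p1 * (u1 * s) = t • (u1 * (p1 * s)) := fun s => by
    rw [← mul_assoc, p1u1, smul_mul_assoc, mul_assoc]
  have b2 : ∀ s, p1 * (u2 * s) = u2 * (p1 * s) := fun s => by
    rw [← mul_assoc, p1u2, mul_assoc]
  have b3 : ∀ s, p1 * (u3 * s) = t⁻¹ • (u3 * (p1 * s)) := fun s => by
    rw [← mul_assoc, p1u3, smul_mul_assoc, mul_assoc]
  have a0 : ∀ s, p0 * (u0 * s) = t • (u0 * (p0 * s)) := fun s => by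
    rw [← mul_assoc, p0u0, smul_mul_assoc, mul_assoc]
  have a1 : ∀ s, p0 * (u1 * s) = u1 * (p0 * s) := fun s => by
    rw [← mul_assoc, p0u1, mul_assoc]
  have a2 : ∀ s, p0 * (u2 * s) = t⁻¹ • (u2 * (p0 * s)) := fun s => by
    rw [← mul_assoc, p0u2, smul_mul_assoc, mul_assoc]
  have a3 : ∀ s, p0 * (u3 * s) = (t⁻¹) ^ 2 • (u3 * (p0 * s)) := fun s => by
    rw [← mul_assoc, p0u3, smul_mul_assoc, mul_assoc]
  have p1z : p1 * z = t • (z * p1) := by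
    rw [hz]
    simp only [mul_sub, sub_mul, smul_mul_assoc, mul_smul_comm, smul_sub, smul_smul, mul_assoc,
      b0, b1, b2, b3, p1u0, p1u1, p1u2, p1u3]
    match_scalars <;> field_simp
  have p0z : p0 * z = t⁻¹ • (z * p0) := by
    rw [hz]
    simp only [mul_sub, sub_mul, smul_mul_assoc, mul_smul_comm, smul_sub, smul_smul, mul_assoc,
      a0, a1, a2, a3, p0u0, p0u1, p0u2, p0u3]
    match_scalars <;> field_simp
  have p1p0 : p1 * p0 = t ^ 2 • (p0 * p1) := by
    rw [hp0]
    simp only [mul_sub, sub_mul, smul_mul_assoc, mul_smul_comm, smul_sub, smul_smul, mul_assoc,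
      b0, b1, b2, b3, p1u0, p1u1, p1u2, p1u3]
    match_scalars <;> field_simp
  have hd' : d = t • (p0 * p1) := by
    rw [hd, p1p0, smul_smul]; congr 1; field_simp
  refine ⟨ht, hz, hp0, hd, hd', p1u0, p1u1, p1u2, p1u3, p0u0, p0u1, p0u2, p0u3, p1z, p1p0,
    ?_, ?_, ?_, ?_, i1, i2, i3, i4⟩
  · rw [hd, smul_mul_assoc, mul_assoc, p0z, mul_smul_comm, ← mul_assoc, p1z]
    simp only [smul_mul_assoc, mul_smul_comm, smul_smul, mul_assoc]
    congr 1; field_simp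
  · rw [hd, smul_mul_assoc, mul_assoc, p0u3, mul_smul_comm, ← mul_assoc, p1u3]
    simp only [smul_mul_assoc, mul_smul_comm, smul_smul, mul_assoc]
    congr 1; field_simp
  · rw [hd, smul_mul_assoc, mul_assoc, p0u2, mul_smul_comm, ← mul_assoc, p1u2]
    simp only [smul_mul_assoc, mul_smul_comm, smul_smul, mul_assoc]
    
  · rw [hd', smul_mul_assoc, mul_smul_comm, ← mul_assoc, p1p0]
    simp only [smul_mul_assoc, mul_smul_comm, smul_smul, mul_assoc]
    congr 1; field_simp

def zs (z d : R) : ℕ → R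
  | 0 => 1
  | 1 => z
  | n + 2 => z * zs z d (n + 1) - d * zs z d n

theorem zs_comm {z d : R} (h : d * z = z * d) (n : ℕ) :
    z * zs z d n = zs z d n * z ∧ d * zs z d n = zs z d n * d ∧
    z * zs z d (n + 1) = zs z d (n + 1) * z ∧ d * zs z d (n + 1) = zs z d (n + 1) * d := by
  induction n with
  | zero => simp [zs, h]
  | succ n ih =>
    obtain ⟨a, b, c, e⟩ := ih
    refine ⟨c, e, ?_, ?_⟩
    · simp only [zs]
      rw [mul_sub, sub_mul, mul_assoc z, ← c, mul_assoc d, ← a, ← mul_assoc, ← mul_assoc,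
        ← mul_assoc, h]
    · simp only [zs]
      rw [mul_sub, sub_mul, mul_assoc z, ← e, mul_assoc d, ← b, ← mul_assoc d z, h, mul_assoc]

theorem zs_right {z d : R} (h : d * z = z * d) (n : ℕ) :
    zs z d (n + 2) = zs z d (n + 1) * z - zs z d n * d := by
  obtain ⟨a, b, c, e⟩ := zs_comm h n
  simp only [zs]; rw [c, b]

def xs (t : K) (u2 u3 p1 z d : R) : ℕ → R
  | 0 => u3
  | 1 => u3 * z - t • (u2 * p1)
  | n + 2 => xs t u2 u3 p1 z d (n + 1) * z - xs t u2 u3 p1 z d n * d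

variable {t : K} {u0 u1 u2 u3 p0 p1 z d : R}

theorem xs_zs (h : KSys t u0 u1 u2 u3 p0 p1 z d) (n : ℕ) :
    xs t u2 u3 p1 z d (n + 1) = u3 * zs z d (n + 1) - t • (u2 * (p1 * zs z d n)) ∧
    xs t u2 u3 p1 z d (n + 2) = u3 * zs z d (n + 2) - t • (u2 * (p1 * zs z d (n + 1))) := by
  induction n with
  | zero =>
    refine ⟨by simp [xs, zs], ?_⟩
    simp only [xs, zs, mul_sub, sub_mul, smul_mul_assoc, mul_assoc, h.dz, mul_one]
    abel
  | succ n ih =>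
    obtain ⟨a, b⟩ := ih
    refine ⟨b, ?_⟩
    rw [show n + 1 + 2 = (n + 1) + 2 from rfl, zs_right h.dz (n + 1), xs, b, a,
      show n + 1 + 1 = n + 2 from rfl, zs_right h.dz n]
    simp only [mul_sub, sub_mul, smul_mul_assoc, mul_assoc, smul_sub]
    abel

theorem xs_one (h : KSys t u0 u1 u2 u3 p0 p1 z d) :
    xs t u2 u3 p1 z d 1 = t • (z * u3) - u2 * p1 := by
  have := h.i1
  rw [sub_eq_iff_eq_add] at this
  simp only [xs]
  rw [this]
  match_scalars <;> ring

theorem xs_left (h : KSys t u0 u1 u2 u3 p0 p1 z d) (n : ℕ) :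
    xs t u2 u3 p1 z d (n + 2) = t • (z * xs t u2 u3 p1 z d (n + 1))
      - t ^ 2 • (d * xs t u2 u3 p1 z d n) ∧
    xs t u2 u3 p1 z d (n + 3) = t • (z * xs t u2 u3 p1 z d (n + 2))
      - t ^ 2 • (d * xs t u2 u3 p1 z d (n + 1)) := by
  have ht := h.ht
  induction n with
  | zero =>
    have e2 : xs t u2 u3 p1 z d (0 + 2) = t • (z * xs t u2 u3 p1 z d (0 + 1))
      - t ^ 2 • (d * xs t u2 u3 p1 z d 0) := by
      have e : xs t u2 u3 p1 z d (0 + 2) = (t • (z * u3) - u2 * p1) * z - u3 * d := by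
        rw [xs, zero_add, xs_one h, xs]
      rw [e, xs, zero_add, xs, h.du3, h.hd']
      have i2 := congrArg (fun r => r * p1) h.i2
      simp only [sub_mul, mul_sub, smul_mul_assoc, mul_smul_comm, smul_smul, mul_assoc, smul_sub,
        h.p1z] at i2 ⊢
      rw [sub_eq_iff_eq_add] at i2
      have i2' : z * (u2 * p1) = (t⁻¹) ^ 2 • ((t ^ 2) • (z * (u2 * p1))) := by
        rw [smul_smul, ← mul_pow, inv_mul_cancel₀ ht, one_pow, one_smul]
      rw [i2', i2]
      match_scalars <;> field_simp <;> ring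
    refine ⟨e2, ?_⟩
    have e1 : xs t u2 u3 p1 z d 1 = u3 * z - t • (u2 * p1) := rfl
    have e1' := xs_one h
    have e2' : xs t u2 u3 p1 z d 2 = xs t u2 u3 p1 z d 1 * z - u3 * d := rfl
    have e3 : xs t u2 u3 p1 z d 3 = xs t u2 u3 p1 z d 2 * z - xs t u2 u3 p1 z d 1 * d := rfl
    have e0 : xs t u2 u3 p1 z d 0 = u3 := rfl
    simp only [zero_add] at e2 ⊢
    rw [e0] at e2
    generalize xs t u2 u3 p1 z d 1 = X1 at *
    generalize xs t u2 u3 p1 z d 2 = X2 at *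
    have l1 : X2 * z = t • (z * (X1 * z)) - t ^ 2 • (d * (u3 * z)) := by
      rw [e2]; simp only [sub_mul, smul_mul_assoc, mul_assoc]
    have l2 : z * X2 = z * (X1 * z) - z * (u3 * d) := by
      rw [e2']; simp only [mul_sub]
    have l3 : X1 * d = t • (z * (u3 * d)) - u2 * (p1 * d) := by
      rw [e1']; simp only [sub_mul, smul_mul_assoc, mul_assoc]
    have l4 : d * X1 = d * (u3 * z) - t • ((t⁻¹) ^ 3 • (u2 * (p1 * d))) := by
      rw [e1, mul_sub, mul_smul_comm, ← mul_assoc d u2, h.du2]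
      simp only [smul_mul_assoc, mul_assoc, h.dp1, mul_smul_comm, smul_smul]
      match_scalars <;> ring
    rw [e3, l1, l2, l3, l4]
    match_scalars <;> field_simp <;> ring
  | succ n ih =>
    obtain ⟨a, b⟩ := ih
    refine ⟨b, ?_⟩
    have e4 : xs t u2 u3 p1 z d (n + 1 + 3) = xs t u2 u3 p1 z d (n + 3) * z
      - xs t u2 u3 p1 z d (n + 2) * d := rfl
    have e3 : xs t u2 u3 p1 z d (n + 3) = xs t u2 u3 p1 z d (n + 2) * z
      - xs t u2 u3 p1 z d (n + 1) * d := rfl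
    have e2 : xs t u2 u3 p1 z d (n + 2) = xs t u2 u3 p1 z d (n + 1) * z
      - xs t u2 u3 p1 z d n * d := rfl
    rw [e4, show n + 1 + 2 = n + 3 from rfl, show n + 1 + 1 = n + 2 from rfl]
    have l1 := congrArg (fun r => r * z) b
    have l2 := congrArg (fun r => r * d) a
    have l3 := congrArg (fun r => t • (z * r)) e3
    have l4 := congrArg (fun r => t ^ 2 • (d * r)) e2
    beta_reduce at l1 l2 l3 l4
    rw [l1, l2, l3, l4]
    simp only [mul_sub, sub_mul, smul_mul_assoc, mul_assoc, smul_sub]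
    abel

theorem xs_d (h : KSys t u0 u1 u2 u3 p0 p1 z d) (n : ℕ) :
    d * xs t u2 u3 p1 z d n = (t⁻¹) ^ 3 • (xs t u2 u3 p1 z d n * d) ∧
    d * xs t u2 u3 p1 z d (n + 1) = (t⁻¹) ^ 3 • (xs t u2 u3 p1 z d (n + 1) * d) := by
  induction n with
  | zero =>
    refine ⟨h.du3, ?_⟩
    simp only [xs, zero_add, mul_sub, sub_mul, mul_smul_comm, smul_mul_assoc, smul_sub, mul_assoc]
    rw [← mul_assoc d, h.du3, ← mul_assoc d u2, h.du2, ← h.dz]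
    simp only [smul_mul_assoc, mul_assoc, h.dp1, mul_smul_comm, smul_smul]
    match_scalars <;> ring
  | succ n ih =>
    obtain ⟨a, b⟩ := ih
    refine ⟨b, ?_⟩
    rw [xs, mul_sub, ← mul_assoc, ← mul_assoc, a, b, sub_mul, smul_sub, mul_assoc _ z, ← h.dz]
    simp only [smul_mul_assoc, mul_assoc]

theorem xs_w (h : KSys t u0 u1 u2 u3 p0 p1 z d) (m : ℕ) :
    xs t u2 u3 p1 z d (m + 2) * xs t u2 u3 p1 z d m
     - t⁻¹ • (xs t u2 u3 p1 z d (m + 1) * xs t u2 u3 p1 z d (m + 1))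
     = (t⁻¹) ^ ((m + 1) ^ 2) • (p1 ^ (m + 3) * p0 ^ m) := by
  have ht := h.ht
  induction m with
  | zero =>
    have e1 := xs_one h
    have e : z * u3 = t⁻¹ • (xs t u2 u3 p1 z d 1 + u2 * p1) := by
      rw [e1, sub_add_cancel, smul_smul, inv_mul_cancel₀ ht, one_smul]
    have i4 := congrArg (fun r => r * p1) h.i4
    have e1' : u3 * z - t • (u2 * p1) = xs t u2 u3 p1 z d 1 := rfl
    rw [show xs t u2 u3 p1 z d (0 + 2) = xs t u2 u3 p1 z d 1 * z - u3 * d from rfl,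
      show xs t u2 u3 p1 z d 0 = u3 from rfl, zero_add]
    generalize xs t u2 u3 p1 z d 1 = X1 at *
    rw [sub_mul, mul_assoc, e, mul_assoc, h.du3, h.hd']
    rw [e1'] at i4
    have e3 : p1 ^ (0 + 3) * p0 ^ 0 = p1 * p1 * p1 := by
      simp [pow_succ]
    rw [e3, ← i4, show (0 + 1) ^ 2 = 1 from rfl, pow_one]
    simp only [mul_add, sub_mul, smul_mul_assoc, mul_smul_comm, smul_smul, mul_assoc, smul_sub,
      smul_add]
    match_scalars <;> field_simp <;> ring
  | succ n ih =>
    obtain ⟨l, _⟩ := xs_left h n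
    obtain ⟨d0, d1⟩ := xs_d h n
    obtain ⟨_, d2⟩ := xs_d h (n + 1)
    have hp : ∀ k : ℕ, p0 * p1 ^ k = (t⁻¹) ^ (2 * k) • (p1 ^ k * p0) := by
      intro k
      induction k with
      | zero => simp
      | succ k ihk =>
        have : p0 * p1 = (t⁻¹) ^ 2 • (p1 * p0) := by
          rw [h.p1p0, smul_smul, ← mul_pow, inv_mul_cancel₀ ht, one_pow, one_smul]
        rw [pow_succ, ← mul_assoc, ihk, smul_mul_assoc, mul_assoc, this, mul_smul_comm, smul_smul,
          mul_assoc]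
        congr 1; ring
    rw [show xs t u2 u3 p1 z d (n + 1 + 2) = xs t u2 u3 p1 z d (n + 2) * z
      - xs t u2 u3 p1 z d (n + 1) * d from rfl, show n + 1 + 1 = n + 2 from rfl]
    rw [show n + 1 + 1 = n + 2 from rfl] at d2
    generalize hX0 : xs t u2 u3 p1 z d n = X0 at *
    generalize hX1 : xs t u2 u3 p1 z d (n + 1) = X1 at *
    generalize hX2 : xs t u2 u3 p1 z d (n + 2) = X2 at *
    have e : z * X1 = t⁻¹ • (X2 + t ^ 2 • (d * X0)) := by
      rw [l, sub_add_cancel, smul_smul, inv_mul_cancel₀ ht, one_smul]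
    have d2' : X2 * d = t ^ 3 • (d * X2) := by
      rw [d2, smul_smul, ← mul_pow, mul_inv_cancel₀ ht, one_pow, one_smul]
    have d1' : X1 * d = t ^ 3 • (d * X1) := by
      rw [d1, smul_smul, ← mul_pow, mul_inv_cancel₀ ht, one_pow, one_smul]
    have s1 : (X2 * z - X1 * d) * X1 - t⁻¹ • (X2 * X2)
        = t ^ 4 • (d * (X2 * X0 - t⁻¹ • (X1 * X1))) := by
      rw [sub_mul, mul_assoc, e, mul_smul_comm, mul_add, mul_smul_comm, ← mul_assoc X2 d, d2', d1']
      simp only [smul_mul_assoc, mul_assoc, mul_sub, mul_smul_comm, smul_sub, smul_add, smul_smul]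
      match_scalars <;> field_simp <;> ring
    rw [s1, ih, h.hd]
    simp only [mul_smul_comm, smul_mul_assoc, mul_assoc, smul_smul]
    rw [← mul_assoc p0, hp]
    simp only [mul_smul_comm, smul_mul_assoc, mul_assoc, smul_smul]
    rw [← pow_succ' p0 n]
    have hq : p1 * (p1 ^ (n + 3) * p0 ^ (n + 1)) = p1 ^ (n + 1 + 3) * p0 ^ (n + 1) := by
      rw [← mul_assoc, ← pow_succ']
    rw [hq]
    congr 1
    rw [show (n + 1 + 1) ^ 2 = (n + 1) ^ 2 + 2 * n + 3 by ring,
      show 2 * (n + 3) = 2 * n + 6 by ring]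
    simp only [pow_add]
    field_simp

theorem zs_xs (h : KSys t u0 u1 u2 u3 p0 p1 z d) (n : ℕ) :
    zs z d (n + 2) = (t⁻¹) ^ (n + 1) • (xs t u2 u3 p1 z d (n + 1) * u0)
      - (t⁻¹) ^ n • (xs t u2 u3 p1 z d n * (p0 * u1)) ∧
    zs z d (n + 3) = (t⁻¹) ^ (n + 2) • (xs t u2 u3 p1 z d (n + 2) * u0)
      - (t⁻¹) ^ (n + 1) • (xs t u2 u3 p1 z d (n + 1) * (p0 * u1)) := by
  have ht := h.ht
  induction n with
  | zero =>
    have e2 : zs z d (0 + 2) = (t⁻¹) ^ (0 + 1) • (xs t u2 u3 p1 z d (0 + 1) * u0)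
      - (t⁻¹) ^ 0 • (xs t u2 u3 p1 z d 0 * (p0 * u1)) := by
      rw [show zs z d (0 + 2) = z * z - d * 1 from rfl, mul_one, zero_add, xs_one h, xs]
      conv_lhs => rw [h.hd, h.hp0]
      conv_lhs => enter [1, 2]; rw [h.hz]
      have i3 := congrArg (fun r => r * u1) h.i3
      simp only [sub_mul, mul_sub, smul_mul_assoc, mul_smul_comm, smul_smul, mul_assoc, smul_sub] at i3 ⊢
      rw [← i3, ← mul_assoc p1 u2, h.p1u2]
      simp only [mul_assoc]
      match_scalars <;> field_simp
    refine ⟨e2, ?_⟩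
    rw [show zs z d (0 + 3) = z * zs z d (0 + 2) - d * z from rfl, e2, (xs_left h 0).1]
    simp only [zero_add]
    rw [xs_one h]
    conv_lhs => enter [2, 2]; rw [h.hz]
    have du2 : ∀ s, d * (u2 * s) = t⁻¹ • (u2 * (d * s)) := fun s => by
      rw [← mul_assoc, h.du2, smul_mul_assoc, mul_assoc]
    simp only [xs, sub_mul, mul_sub, smul_mul_assoc, mul_smul_comm, smul_smul, mul_assoc, smul_sub,
      du2]
    rw [h.hd]
    simp only [smul_mul_assoc, mul_smul_comm, smul_smul, mul_assoc]
    match_scalars <;> field_simp <;> ring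
  | succ n ih =>
    obtain ⟨a, b⟩ := ih
    refine ⟨b, ?_⟩
    rw [show zs z d (n + 1 + 3) = z * zs z d (n + 3) - d * zs z d (n + 2) from rfl, a, b,
      show n + 1 + 2 = n + 3 from rfl, (xs_left h n).2, show n + 1 + 1 = n + 2 from rfl]
    conv_rhs => enter [2]; rw [(xs_left h n).1]
    simp only [sub_mul, mul_sub, smul_mul_assoc, mul_smul_comm, smul_smul, mul_assoc, smul_sub]
    match_scalars <;> simp only [inv_pow, pow_succ] <;> field_simp

end part3

section part4

def Psub : Subring F := (Polynomial.eval₂RingHom (Int.castRingHom F) qq).range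

theorem qq_mem : qq ∈ Psub := ⟨Polynomial.X, by simp⟩

theorem qq_ne : qq ≠ 0 := RatFunc.X_ne_zero

def ht (a : Idx) : ℕ := a.2.1 + a.2.2.1
def tot (a : Idx) : ℕ := a.1 + a.2.1 + a.2.2.1 + a.2.2.2

theorem tri_refl (a : Idx) : tri a a := ⟨0, 0, by simp⟩

theorem tri_trans {a b c : Idx} (h : tri a b) (h' : tri b c) : tri a c := by
  obtain ⟨s, r, h1, h2, h3, h4⟩ := h
  obtain ⟨s', r', h1', h2', h3', h4'⟩ := h'
  exact ⟨s + s', r + r', by push_cast; omega, by push_cast; omega, by push_cast; omega,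
    by push_cast; omega⟩

theorem tri_ht {a b : Idx} (h : tri a b) : ht a ≤ ht b ∧ tot a = tot b ∧ (ht a = ht b → a = b) := by
  obtain ⟨s, r, h1, h2, h3, h4⟩ := h
  obtain ⟨a1, a2, a3, a4⟩ := a
  obtain ⟨b1, b2, b3, b4⟩ := b
  simp only [ht, tot] at *
  refine ⟨by omega, by omega, fun h => ?_⟩
  have hs : s = 0 := by omega
  have hr : r = 0 := by omega
  subst hs hr
  simp only [Prod.mk.injEq]
  omega

theorem tri_N {a b : Idx} (h : tri a b) : Nnum a = Nnum b := by
  obtain ⟨s, r, h1, h2, h3, h4⟩ := h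
  unfold Nnum
  rw [h1, h2, h3, h4]; ring

theorem Sset_lt {a b : Idx} (h : b ∈ Sset a) : tri a b ∧ ht a < ht b := by
  refine ⟨h.1, ?_⟩
  obtain ⟨h1, h2, h3⟩ := tri_ht h.1
  rcases h1.lt_or_eq with h | h'
  · exact h
  · exact absurd (h3 h') h.2

theorem Sset_of_lt {a b : Idx} (h : tri a b) (h' : ht a < ht b) : b ∈ Sset a :=
  ⟨h, fun e => by subst e; exact lt_irrefl _ h'⟩

theorem Sset_tri {a b c : Idx} (h : b ∈ Sset a) (h' : tri b c) : c ∈ Sset a :=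
  Sset_of_lt (tri_trans h.1 h') ((Sset_lt h).2.trans_le (tri_ht h').1)

variable {M : Type*} [AddCommGroup M] [Module F M]

def LatE (E : Idx → M) (a : Idx) : Submodule Psub M := Submodule.span Psub (E '' {b | tri a b})
def Rad (E : Idx → M) (a : Idx) : Submodule Psub M :=
  Submodule.span Psub ((fun b => qq • E b) '' Sset a)
def Good (E : Idx → M) (a : Idx) (Y : M) : Prop := Y - E a ∈ Rad E a

variable {E : Idx → M}

theorem Psub_smul (N : Submodule Psub M) {c : F} (hc : c ∈ Psub) {x : M} (hx : x ∈ N) : c • x ∈ N :=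
  N.smul_mem (⟨c, hc⟩ : Psub) hx

theorem E_mem_Lat {a b : Idx} (h : tri a b) : E b ∈ LatE E a := Submodule.subset_span ⟨b, h, rfl⟩

theorem qE_mem_Rad {a b : Idx} (h : b ∈ Sset a) : qq • E b ∈ Rad E a :=
  Submodule.subset_span ⟨b, h, rfl⟩

theorem q_mem_Rad {a a' : Idx} (h : a' ∈ Sset a) {X : M} (hX : X ∈ LatE E a') : qq • X ∈ Rad E a := by
  induction hX using Submodule.span_induction with
  | mem x hx =>
    obtain ⟨b, hb, rfl⟩ := hx
    exact qE_mem_Rad (Sset_tri h hb)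
  | zero => simp
  | add x y _ _ h1 h2 => rw [smul_add]; exact add_mem h1 h2
  | smul c x _ h1 => rw [smul_comm]; exact Submodule.smul_mem _ c h1

theorem Rad_le_Lat (a : Idx) : Rad E a ≤ LatE E a := by
  refine Submodule.span_le.2 ?_
  rintro _ ⟨b, hb, rfl⟩
  exact Psub_smul _ qq_mem (E_mem_Lat hb.1)

theorem Good.lat {a : Idx} {Y : M} (h : Good E a Y) : Y ∈ LatE E a := by
  have := add_mem (Rad_le_Lat a h) (E_mem_Lat (E := E) (tri_refl a))
  rwa [sub_add_cancel] at this

theorem good_E (a : Idx) : Good E a (E a) := by simp [Good]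

theorem Good.add {a : Idx} {Y X : M} (h : Good E a Y) (hX : X ∈ Rad E a) : Good E a (Y + X) := by
  unfold Good at *
  rw [add_sub_right_comm]; exact add_mem h hX

theorem map_lat {a a' : Idx} (T : M →ₗ[F] M) (hT : ∀ b, tri a b → T (E b) ∈ LatE E a') {X : M}
    (hX : X ∈ LatE E a) : T X ∈ LatE E a' := by
  induction hX using Submodule.span_induction with
  | mem x hx =>
    obtain ⟨b, hb, rfl⟩ := hx
    exact hT b hb
  | zero => simp
  | add x y _ _ h1 h2 => rw [map_add]; exact add_mem h1 h2
  | smul c x _ h1 =>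
    have : T (c • x) = c • T x := T.map_smul (c : F) x
    rw [this]; exact Submodule.smul_mem _ c h1

theorem map_good {a a' : Idx} (T : M →ₗ[F] M) (f : Idx → Idx) (h0 : Good E a' (T (E a)))
    (hT : ∀ b ∈ Sset a, T (E b) ∈ LatE E (f b) ∧ f b ∈ Sset a') {Y : M}
    (hY : Good E a Y) : Good E a' (T Y) := by
  have key : ∀ X ∈ Rad E a, T X ∈ Rad E a' := by
    intro X hX
    induction hX using Submodule.span_induction with
    | mem x hx =>
      obtain ⟨b, hb, rfl⟩ := hx
      simp only [map_smul]
      exact q_mem_Rad (hT b hb).2 (hT b hb).1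
    | zero => simp
    | add x y _ _ h1 h2 => rw [map_add]; exact add_mem h1 h2
    | smul c x _ h1 =>
      have : T (c • x) = c • T x := T.map_smul (c : F) x
      rw [this]; exact Submodule.smul_mem _ c h1
  have := h0.add (key _ hY)
  rwa [← map_add, add_sub_cancel] at this


theorem eval_qq (p : Polynomial ℤ) : Polynomial.eval₂ (Int.castRingHom F) qq p
    = algebraMap (Polynomial ℚ) F (p.map (Int.castRingHom ℚ)) := by
  have h : (Polynomial.eval₂RingHom (Int.castRingHom F) qq)
      = (algebraMap (Polynomial ℚ) F).comp (Polynomial.mapRingHom (Int.castRingHom ℚ)) := by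
    apply Polynomial.ringHom_ext
    · intro n; simp
    · simp [qq]
  exact congrArg (fun f => f p) h

theorem eval_qq_inj {p r : Polynomial ℤ} (h : Polynomial.eval₂ (Int.castRingHom F) qq p
    = Polynomial.eval₂ (Int.castRingHom F) qq r) : p = r := by
  rw [eval_qq, eval_qq] at h
  have h1 := IsFractionRing.injective (Polynomial ℚ) F h
  exact Polynomial.map_injective _ (Int.cast_injective) h1

/-- A bar-invariant element of `q ℤ[q]` vanishes. -/
theorem bar_zero (bar : F →+* F) (hbar : bar qq = qq⁻¹) {c : F} (hc : c ∈ Psub)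
    (h : bar (qq * c) = qq * c) : c = 0 := by
  obtain ⟨p, rfl⟩ := hc
  have hq := qq_ne
  by_contra hne
  have hp : p ≠ 0 := by rintro rfl; simp at hne
  simp only [Polynomial.coe_eval₂RingHom] at h
  have hb : bar (Polynomial.eval₂ (Int.castRingHom F) qq p)
      = Polynomial.eval₂ (Int.castRingHom F) qq⁻¹ p := by
    rw [Polynomial.hom_eval₂, hbar]
    congr 1
    exact RingHom.ext_int _ _
  have hrev : Polynomial.eval₂ (Int.castRingHom F) qq p.reverse
      = Polynomial.eval₂ (Int.castRingHom F) qq⁻¹ p * qq ^ p.natDegree := by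
    let _ : Invertible (qq⁻¹) := invertibleOfNonzero (inv_ne_zero hq)
    have := Polynomial.eval₂_reverse_mul_pow (Int.castRingHom F) qq⁻¹ p
    rw [invOf_eq_inv, inv_inv] at this
    rw [← this, mul_assoc, ← mul_pow, inv_mul_cancel₀ hq, one_pow, mul_one]
  rw [map_mul, hbar, hb] at h
  have h2 : Polynomial.eval₂ (Int.castRingHom F) qq p.reverse
      = Polynomial.eval₂ (Int.castRingHom F) qq (p * Polynomial.X ^ (p.natDegree + 2)) := by
    rw [hrev, Polynomial.eval₂_mul, Polynomial.eval₂_X_pow]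
    have : Polynomial.eval₂ (Int.castRingHom F) qq⁻¹ p
        = qq * (qq * Polynomial.eval₂ (Int.castRingHom F) qq p) := by
      rw [← h, mul_inv_cancel_left₀ hq]
    rw [this]; ring
  have h3 := congrArg Polynomial.natDegree (eval_qq_inj h2)
  have h4 := p.reverse_natDegree_le
  rw [Polynomial.natDegree_mul_X_pow _ hp] at h3
  omega

def Up (E : Idx → M) (a : Idx) : Submodule F M := Submodule.span F (E '' Sset a)

theorem Rad_Up {a : Idx} {X : M} (hX : X ∈ Rad E a) : X ∈ Up E a := by
  induction hX using Submodule.span_induction with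
  | mem x hx =>
    obtain ⟨b, hb, rfl⟩ := hx
    exact Submodule.smul_mem _ _ (Submodule.subset_span ⟨b, hb, rfl⟩)
  | zero => simp
  | add x y _ _ h1 h2 => exact add_mem h1 h2
  | smul c x _ h1 => exact Submodule.smul_mem _ (c : F) h1

theorem Up_le {a b : Idx} (h : b ∈ Sset a) : Up E b ≤ Up E a := by
  refine Submodule.span_le.2 ?_
  rintro _ ⟨c, hc, rfl⟩
  exact Submodule.subset_span ⟨c, Sset_tri h hc.1, rfl⟩

theorem sig_E (bar : F →+* F) (σ : M → M)
    (hadd : ∀ x y, σ (x + y) = σ x + σ y) (hsm : ∀ (c : F) x, σ (c • x) = bar c • σ x)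
    (B : Idx → M) (hB : ∀ a, Good E a (B a)) (hσB : ∀ a, σ (B a) = qq ^ (-Nnum a) • B a) :
    ∀ (k : ℕ) (b : Idx), tot b - ht b = k → σ (E b) - qq ^ (-Nnum b) • E b ∈ Up E b := by
  have h0 : σ 0 = 0 := by have := hsm 0 0; simpa using this
  intro k
  induction k using Nat.strong_induction_on with
  | _ k ih =>
  intro b hk
  have hR : ∀ X ∈ Rad E b, σ X ∈ Up E b := by
    intro X hX
    induction hX using Submodule.span_induction with
    | mem x hx =>
      obtain ⟨c, hc, rfl⟩ := hx
      have h1 := Sset_lt hc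
      have h2 := tri_ht hc.1
      have h3 : ht c ≤ tot c := by simp only [ht, tot]; omega
      have := ih (tot c - ht c) (by omega) c rfl
      have h4 := add_mem (Up_le hc this) (Submodule.smul_mem _ (qq ^ (-Nnum c))
        (Submodule.subset_span ⟨c, hc, rfl⟩ : E c ∈ Up E b))
      rw [sub_add_cancel] at h4
      simp only [hsm]
      exact Submodule.smul_mem _ _ h4
    | zero => simp [h0]
    | add x y _ _ h1 h2 => rw [hadd]; exact add_mem h1 h2
    | smul c x _ h1 =>
      have : σ (c • x) = bar (c : F) • σ x := hsm c x
      rw [this]; exact Submodule.smul_mem _ _ h1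
  have h1 : σ (B b) = σ (B b - E b) + σ (E b) := by rw [← hadd, sub_add_cancel]
  have h2 : σ (E b) - qq ^ (-Nnum b) • E b
      = qq ^ (-Nnum b) • (B b - E b) - σ (B b - E b) := by
    rw [hσB] at h1
    rw [smul_sub, h1]; abel
  rw [h2]
  exact sub_mem (Submodule.smul_mem _ _ (Rad_Up (hB b))) (hR _ (hB b))

theorem uniq (hE : LinearIndependent F E) (bar : F →+* F) (hbar : bar qq = qq⁻¹) (σ : M → M)
    (hadd : ∀ x y, σ (x + y) = σ x + σ y) (hsm : ∀ (c : F) x, σ (c • x) = bar c • σ x)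
    (B : Idx → M) (hB : ∀ a, Good E a (B a)) (hσB : ∀ a, σ (B a) = qq ^ (-Nnum a) • B a)
    {a : Idx} {Y : M} (hY : Good E a Y) (hσY : σ Y = qq ^ (-Nnum a) • Y) : Y = B a := by
  classical
  obtain ⟨L, hL⟩ := LinearMap.exists_leftInverse_of_injective (Finsupp.linearCombination F E)
    (LinearMap.ker_eq_bot.2 hE)
  have hLE : ∀ b, L (E b) = Finsupp.single b 1 := by
    intro b
    have := LinearMap.congr_fun hL (Finsupp.single b 1)
    simpa using this
  have h0 : σ 0 = 0 := by have := hsm 0 0; simpa using this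
  have hX : Y - B a ∈ Rad E a := by
    have := sub_mem hY (hB a)
    rwa [sub_sub_sub_cancel_right] at this
  have hσX : σ (Y - B a) = qq ^ (-Nnum a) • (Y - B a) := by
    have : σ Y = σ (Y - B a) + σ (B a) := by rw [← hadd, sub_add_cancel]
    rw [smul_sub, ← hσY, ← hσB, this]; abel
  generalize hXd : Y - B a = X at hX hσX
  have hco : ∀ b, (∃ c ∈ Psub, L X b = qq * c) ∧ (L X b ≠ 0 → b ∈ Sset a) := by
    clear hσX hXd
    intro b
    induction hX using Submodule.span_induction with
    | mem x hx =>
      obtain ⟨c, hc, rfl⟩ := hx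
      simp only [map_smul, hLE, Finsupp.smul_apply, smul_eq_mul]
      by_cases h : c = b
      · subst h
        exact ⟨⟨1, one_mem _, by simp⟩, fun _ => hc⟩
      · rw [Finsupp.single_eq_of_ne (Ne.symm h)]
        exact ⟨⟨0, zero_mem _, by simp⟩, by simp⟩
    | zero => exact ⟨⟨0, zero_mem _, by simp⟩, by simp⟩
    | add x y _ _ h1 h2 =>
      obtain ⟨⟨c, hc, e⟩, i⟩ := h1
      obtain ⟨⟨c', hc', e'⟩, i'⟩ := h2
      refine ⟨⟨c + c', add_mem hc hc', by rw [map_add, Finsupp.add_apply, e, e', mul_add]⟩, ?_⟩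
      intro h
      by_cases hz : L x b = 0
      · exact i' fun h' => h (by rw [map_add, Finsupp.add_apply, hz, h', add_zero])
      · exact i hz
    | smul c x _ h1 =>
      obtain ⟨⟨d, hd, e⟩, i⟩ := h1
      have h2 : L (c • x) b = (c : F) * L x b := by
        have : L (c • x) = (c : F) • L x := L.map_smul (c : F) x
        rw [this]; rfl
      refine ⟨⟨c * d, mul_mem c.2 hd, by rw [h2, e]; ring⟩, fun h => i fun h' => h ?_⟩
      rw [h2, h', mul_zero]
  have hrec : X = Finsupp.linearCombination F E (L X) := by
    clear hσX hco hXd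
    induction hX using Submodule.span_induction with
    | mem x hx =>
      obtain ⟨c, hc, rfl⟩ := hx
      simp [hLE]
    | zero => simp
    | add x y _ _ h1 h2 => rw [map_add, map_add, ← h1, ← h2]
    | smul c x _ h1 =>
      have : L (c • x) = (c : F) • L x := L.map_smul (c : F) x
      rw [this, map_smul, ← h1]; rfl
  suffices hz : L X = 0 by
    rw [hz, map_zero] at hrec
    exact sub_eq_zero.1 (hXd.trans hrec)
  by_contra hne
  obtain ⟨b, hb, hmin⟩ := Finset.exists_min_image (L X).support ht
    (Finsupp.support_nonempty_iff.2 hne)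
  rw [Finsupp.mem_support_iff] at hb
  have hUp : ∀ c, ht b ≤ ht c → ∀ x ∈ Up E c, L x b = 0 := by
    intro c hc x hx
    induction hx using Submodule.span_induction with
    | mem x hx =>
      obtain ⟨d, hd, rfl⟩ := hx
      rw [hLE, Finsupp.single_eq_of_ne]
      rintro rfl
      have := (Sset_lt hd).2
      omega
    | zero => simp
    | add x y _ _ h1 h2 => rw [map_add, Finsupp.add_apply, h1, h2, add_zero]
    | smul c x _ h1 => rw [map_smul, Finsupp.smul_apply, h1, smul_zero]
  let σ' : M →+ M := ⟨⟨σ, h0⟩, hadd⟩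
  have hσs : σ X = ∑ c ∈ (L X).support, bar (L X c) • σ (E c) := by
    conv_lhs => rw [hrec]
    rw [Finsupp.linearCombination_apply, Finsupp.sum]
    change σ' _ = _
    rw [map_sum]
    exact Finset.sum_congr rfl fun c _ => hsm _ _
  have hcoef : L (σ X) b = bar (L X b) * qq ^ (-Nnum b) := by
    rw [hσs, map_sum, Finsupp.finsetSum_apply, Finset.sum_eq_single b]
    · have := hUp b le_rfl _ (sig_E bar σ hadd hsm B hB hσB _ b rfl)
      rw [map_sub, Finsupp.sub_apply, sub_eq_zero] at this
      rw [map_smul, Finsupp.smul_apply, this, map_smul, Finsupp.smul_apply, hLE]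
      simp
    · intro c hc hcb
      have := hUp c (hmin c hc) _ (sig_E bar σ hadd hsm B hB hσB _ c rfl)
      rw [map_sub, Finsupp.sub_apply, sub_eq_zero] at this
      rw [map_smul, Finsupp.smul_apply, this, map_smul, Finsupp.smul_apply, hLE,
        Finsupp.single_eq_of_ne (Ne.symm hcb)]
      simp
    · intro h; exact absurd (Finsupp.mem_support_iff.2 hb) h
  rw [hσX, map_smul, Finsupp.smul_apply, smul_eq_mul, mul_comm,
    tri_N ((hco b).2 hb).1] at hcoef
  have h5 := mul_right_cancel₀ (zpow_ne_zero _ qq_ne) hcoef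
  obtain ⟨c, hc, e⟩ := (hco b).1
  rw [e] at h5 hb
  exact hb (by rw [bar_zero bar hbar hc h5.symm, mul_zero])

end part4

section part5

variable {R : Type*} [Ring R] [Algebra F R]

def Em (u0 u1 u2 u3 : R) (a : Idx) : R :=
  qq ^ bexp a • (u3 ^ a.1 * u2 ^ a.2.1 * u1 ^ a.2.2.1 * u0 ^ a.2.2.2)

theorem choose_two_succ (n : ℕ) : (n + 1).choose 2 = n.choose 2 + n := by
  rw [Nat.choose_succ_succ' n 1, Nat.choose_one_right, add_comm]

theorem pow_qcomm {x y : R} {c : F} (h : x * y = c • (y * x)) (n : ℕ) :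
    x * y ^ n = c ^ n • (y ^ n * x) := by
  induction n with
  | zero => simp
  | succ n ih =>
    rw [pow_succ, ← mul_assoc, ih, smul_mul_assoc, mul_assoc, h, mul_smul_comm, smul_smul,
      ← mul_assoc, ← pow_succ, ← pow_succ]

theorem pow_qcomm' {x y : R} {c : F} (h : x * y = c • (y * x)) (n : ℕ) :
    x ^ n * y = c ^ n • (y * x ^ n) := by
  induction n with
  | zero => simp
  | succ n ih =>
    rw [pow_succ', mul_assoc, ih, mul_smul_comm, ← mul_assoc, h, smul_mul_assoc, smul_smul,
      mul_assoc, ← pow_succ', ← pow_succ]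

variable {u0 u1 u2 u3 p0 p1 z d : R}

theorem Em_L3 (a b c e : ℕ) :
    Em u0 u1 u2 u3 (a + 1, b, c, e) = qq ^ a • (u3 * Em u0 u1 u2 u3 (a, b, c, e)) := by
  simp only [Em, bexp, choose_two_succ, mul_smul_comm, smul_smul, pow_succ', mul_assoc, ← pow_add]
  congr 2; ring

theorem Em_R0 (a b c e : ℕ) :
    Em u0 u1 u2 u3 (a, b, c, e + 1) = qq ^ e • (Em u0 u1 u2 u3 (a, b, c, e) * u0) := by
  simp only [Em, bexp, choose_two_succ, smul_mul_assoc, smul_smul, pow_succ, mul_assoc, ← pow_add]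
  congr 2; ring

theorem Em_L2 (h : KRel (qq ^ 2) u0 u1 u2 u3) (a b c e : ℕ) :
    Em u0 u1 u2 u3 (a, b + 1, c, e) = qq ^ (2 * a + b) • (u2 * Em u0 u1 u2 u3 (a, b, c, e)) := by
  have h1 := pow_qcomm h.r23 a
  simp only [Em, bexp, choose_two_succ, mul_smul_comm, smul_smul]
  rw [← mul_assoc, ← mul_assoc, ← mul_assoc, h1]
  simp only [smul_mul_assoc, smul_smul, pow_succ', mul_assoc]
  congr 1
  have := qq_ne
  simp only [inv_pow, ← pow_mul]
  field_simp
  ring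

theorem Em_R1 (h : KRel (qq ^ 2) u0 u1 u2 u3) (a b c e : ℕ) :
    Em u0 u1 u2 u3 (a, b, c + 1, e) = qq ^ (2 * e + c) • (Em u0 u1 u2 u3 (a, b, c, e) * u1) := by
  have h1 := pow_qcomm' h.r01 e
  simp only [Em, bexp, choose_two_succ, smul_mul_assoc, smul_smul]
  rw [mul_assoc _ _ u1, h1]
  simp only [mul_smul_comm, smul_smul, pow_succ, mul_assoc]
  congr 1
  have := qq_ne
  simp only [inv_pow, ← pow_mul]
  field_simp
  ring

theorem Em_P1 (h : KRel (qq ^ 2) u0 u1 u2 u3) (hs : KSys (qq ^ 2) u0 u1 u2 u3 p0 p1 z d)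
    (hp1 : p1 = u3 * u1 - qq ^ 2 • (u2 * u2)) (a b c e : ℕ) :
    qq ^ (3 * a + 2 * b + c) • (p1 * Em u0 u1 u2 u3 (a, b, c, e))
      = Em u0 u1 u2 u3 (a + 1, b, c + 1, e)
        - qq ^ (1 + a + c) • Em u0 u1 u2 u3 (a, b + 2, c, e) := by
  have h1 := pow_qcomm hs.p1u3 a
  have h2 : p1 * u2 ^ b = u2 ^ b * p1 := (show Commute p1 u2 from hs.p1u2).pow_right b
  have h3 := pow_qcomm' h.r23 b
  have h4 : p1 * (u3 ^ a * u2 ^ b * u1 ^ c * u0 ^ e)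
      = ((qq ^ 2)⁻¹ ^ a) • ((qq ^ 2)⁻¹ ^ b • (u3 ^ (a + 1) * u2 ^ b * u1 ^ (c + 1) * u0 ^ e)
        - qq ^ 2 • (u3 ^ a * u2 ^ (b + 2) * u1 ^ c * u0 ^ e)) := by
    calc p1 * (u3 ^ a * u2 ^ b * u1 ^ c * u0 ^ e)
        = (p1 * u3 ^ a) * u2 ^ b * u1 ^ c * u0 ^ e := by simp only [mul_assoc]
      _ = ((qq ^ 2)⁻¹ ^ a) • (u3 ^ a * (p1 * u2 ^ b) * u1 ^ c * u0 ^ e) := by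
        rw [h1]; simp only [mul_assoc, smul_mul_assoc]
      _ = ((qq ^ 2)⁻¹ ^ a) • (u3 ^ a * (u2 ^ b * u3) * u1 ^ (c + 1) * u0 ^ e
          - qq ^ 2 • (u3 ^ a * u2 ^ (b + 2) * u1 ^ c * u0 ^ e)) := by
        rw [h2, hp1, pow_succ' u1 c, pow_succ u2 (b + 1), pow_succ u2 b]
        simp only [mul_sub, sub_mul, mul_assoc, smul_mul_assoc, mul_smul_comm]
      _ = _ := by
        rw [h3, pow_succ u3 a]; simp only [mul_assoc, smul_mul_assoc, mul_smul_comm]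
  simp only [Em, bexp, choose_two_succ, mul_smul_comm, h4, smul_sub, smul_smul]
  have := qq_ne
  simp only [inv_pow, ← pow_mul]
  congr 2 <;> field_simp <;> ring

theorem Em_P0 (h : KRel (qq ^ 2) u0 u1 u2 u3) (hs : KSys (qq ^ 2) u0 u1 u2 u3 p0 p1 z d)
    (a b c e : ℕ) :
    qq ^ (b + 2 * c + 3 * e) • (Em u0 u1 u2 u3 (a, b, c, e) * p0)
      = Em u0 u1 u2 u3 (a, b + 1, c, e + 1)
        - qq ^ (1 + b + e) • Em u0 u1 u2 u3 (a, b, c + 2, e) := by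
  have h0 : u0 * p0 = (qq ^ 2)⁻¹ • (p0 * u0) := by
    rw [hs.p0u0, smul_smul, inv_mul_cancel₀ hs.ht, one_smul]
  have h1 := pow_qcomm' h0 e
  have h2 : u1 ^ c * p0 = p0 * u1 ^ c := ((show Commute p0 u1 from hs.p0u1).pow_right c).symm
  have h3 := pow_qcomm h.r01 c
  have h4 : (u3 ^ a * u2 ^ b * u1 ^ c * u0 ^ e) * p0
      = ((qq ^ 2)⁻¹ ^ e) • ((qq ^ 2)⁻¹ ^ c • (u3 ^ a * u2 ^ (b + 1) * u1 ^ c * u0 ^ (e + 1))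
        - qq ^ 2 • (u3 ^ a * u2 ^ b * u1 ^ (c + 2) * u0 ^ e)) := by
    calc (u3 ^ a * u2 ^ b * u1 ^ c * u0 ^ e) * p0
        = u3 ^ a * u2 ^ b * u1 ^ c * (u0 ^ e * p0) := by simp only [mul_assoc]
      _ = ((qq ^ 2)⁻¹ ^ e) • (u3 ^ a * u2 ^ b * (u1 ^ c * p0) * u0 ^ e) := by
        rw [h1]; simp only [mul_assoc, mul_smul_comm]
      _ = ((qq ^ 2)⁻¹ ^ e) • (u3 ^ a * u2 ^ (b + 1) * (u0 * u1 ^ c) * u0 ^ e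
          - qq ^ 2 • (u3 ^ a * u2 ^ b * u1 ^ (c + 2) * u0 ^ e)) := by
        rw [h2, hs.hp0, pow_succ u2 b, pow_succ' u1 (c + 1), pow_succ' u1 c]
        simp only [mul_sub, sub_mul, mul_assoc, smul_mul_assoc, mul_smul_comm]
      _ = _ := by
        rw [h3, pow_succ' u0 e]; simp only [mul_assoc, smul_mul_assoc, mul_smul_comm]
  simp only [Em, bexp, choose_two_succ, smul_mul_assoc, h4, smul_sub, smul_smul]
  have := qq_ne
  simp only [inv_pow, ← pow_mul]
  congr 2 <;> field_simp <;> ring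

local notation "EE" => Em u0 u1 u2 u3

theorem lat_L2 (h : KRel (qq ^ 2) u0 u1 u2 u3) {a b c e : ℕ} {X : R}
    (hX : X ∈ LatE EE (a, b, c, e)) :
    qq ^ (2 * a + b) • (u2 * X) ∈ LatE EE (a, b + 1, c, e) := by
  refine map_lat (qq ^ (2 * a + b) • LinearMap.mulLeft F u2) ?_ hX
  rintro ⟨b1, b2, b3, b4⟩ ⟨s, r, h1, h2, h3, h4⟩
  simp only at h1 h2 h3 h4
  have hk : 2 * a + b = r + (2 * b1 + b2) := by omega
  rw [LinearMap.smul_apply, LinearMap.mulLeft_apply, hk, pow_add, ← smul_smul, ← Em_L2 h]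
  exact Psub_smul _ (pow_mem qq_mem _) (E_mem_Lat ⟨s, r, by dsimp only; omega, by dsimp only; omega,
    by dsimp only; omega, by dsimp only; omega⟩)

theorem lat_R1 (h : KRel (qq ^ 2) u0 u1 u2 u3) {a b c e : ℕ} {X : R}
    (hX : X ∈ LatE EE (a, b, c, e)) :
    qq ^ (2 * e + c) • (X * u1) ∈ LatE EE (a, b, c + 1, e) := by
  refine map_lat (qq ^ (2 * e + c) • LinearMap.mulRight F u1) ?_ hX
  rintro ⟨b1, b2, b3, b4⟩ ⟨s, r, h1, h2, h3, h4⟩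
  simp only at h1 h2 h3 h4
  have hk : 2 * e + c = s + (2 * b4 + b3) := by omega
  rw [LinearMap.smul_apply, LinearMap.mulRight_apply, hk, pow_add, ← smul_smul, ← Em_R1 h]
  exact Psub_smul _ (pow_mem qq_mem _) (E_mem_Lat ⟨s, r, by dsimp only; omega, by dsimp only; omega,
    by dsimp only; omega, by dsimp only; omega⟩)

theorem lat_P1 (h : KRel (qq ^ 2) u0 u1 u2 u3) (hs : KSys (qq ^ 2) u0 u1 u2 u3 p0 p1 z d)
    (hp1 : p1 = u3 * u1 - qq ^ 2 • (u2 * u2)) {a b c e : ℕ} {X : R}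
    (hX : X ∈ LatE EE (a, b, c, e)) :
    qq ^ (3 * a + 2 * b + c) • (p1 * X) ∈ LatE EE (a + 1, b, c + 1, e) := by
  refine map_lat (qq ^ (3 * a + 2 * b + c) • LinearMap.mulLeft F p1) ?_ hX
  rintro ⟨b1, b2, b3, b4⟩ ⟨s, r, h1, h2, h3, h4⟩
  simp only at h1 h2 h3 h4
  have hk : 3 * a + 2 * b + c = 3 * b1 + 2 * b2 + b3 := by omega
  rw [LinearMap.smul_apply, LinearMap.mulLeft_apply, hk, Em_P1 h hs hp1]
  refine sub_mem (E_mem_Lat ⟨s, r, ?_⟩)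
    (Psub_smul _ (pow_mem qq_mem _) (E_mem_Lat ⟨s + 1, r, ?_⟩)) <;>
  exact ⟨by dsimp only; omega, by dsimp only; omega, by dsimp only; omega, by dsimp only; omega⟩

theorem lat_P0 (h : KRel (qq ^ 2) u0 u1 u2 u3) (hs : KSys (qq ^ 2) u0 u1 u2 u3 p0 p1 z d)
    {a b c e : ℕ} {X : R} (hX : X ∈ LatE EE (a, b, c, e)) :
    qq ^ (b + 2 * c + 3 * e) • (X * p0) ∈ LatE EE (a, b + 1, c, e + 1) := by
  refine map_lat (qq ^ (b + 2 * c + 3 * e) • LinearMap.mulRight F p0) ?_ hX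
  rintro ⟨b1, b2, b3, b4⟩ ⟨s, r, h1, h2, h3, h4⟩
  simp only at h1 h2 h3 h4
  have hk : b + 2 * c + 3 * e = b2 + 2 * b3 + 3 * b4 := by omega
  rw [LinearMap.smul_apply, LinearMap.mulRight_apply, hk, Em_P0 h hs]
  refine sub_mem (E_mem_Lat ⟨s, r, ?_⟩)
    (Psub_smul _ (pow_mem qq_mem _) (E_mem_Lat ⟨s, r + 1, ?_⟩)) <;>
  exact ⟨by dsimp only; omega, by dsimp only; omega, by dsimp only; omega, by dsimp only; omega⟩

theorem good_L3 {a b c e : ℕ} {X : R} (hX : Good EE (a, b, c, e) X) :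
    Good EE (a + 1, b, c, e) (qq ^ a • (u3 * X)) := by
  refine map_good (qq ^ a • LinearMap.mulLeft F u3) (fun b => (b.1 + 1, b.2)) ?_ ?_ hX
  · rw [LinearMap.smul_apply, LinearMap.mulLeft_apply, ← Em_L3]; exact good_E _
  rintro ⟨b1, b2, b3, b4⟩ hb
  have hl := (Sset_lt hb).2
  obtain ⟨⟨s, r, h1, h2, h3, h4⟩, -⟩ := hb
  simp only at h1 h2 h3 h4
  have hk : a = s + b1 := by omega
  constructor
  · rw [LinearMap.smul_apply, LinearMap.mulLeft_apply]
    conv => enter [2, 1]; rw [hk]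
    rw [pow_add, ← smul_smul, ← Em_L3]
    exact Psub_smul _ (pow_mem qq_mem _) (E_mem_Lat (tri_refl _))
  · refine Sset_of_lt ⟨s, r, ?_⟩ hl
    exact ⟨by dsimp only; omega, by dsimp only; omega, by dsimp only; omega, by dsimp only; omega⟩

theorem good_R0 {a b c e : ℕ} {X : R} (hX : Good EE (a, b, c, e) X) :
    Good EE (a, b, c, e + 1) (qq ^ e • (X * u0)) := by
  refine map_good (qq ^ e • LinearMap.mulRight F u0)
    (fun b => (b.1, b.2.1, b.2.2.1, b.2.2.2 + 1)) ?_ ?_ hX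
  · rw [LinearMap.smul_apply, LinearMap.mulRight_apply, ← Em_R0]; exact good_E _
  rintro ⟨b1, b2, b3, b4⟩ hb
  have hl := (Sset_lt hb).2
  obtain ⟨⟨s, r, h1, h2, h3, h4⟩, -⟩ := hb
  simp only at h1 h2 h3 h4
  have hk : e = r + b4 := by omega
  constructor
  · rw [LinearMap.smul_apply, LinearMap.mulRight_apply]
    conv => enter [2, 1]; rw [hk]
    rw [pow_add, ← smul_smul, ← Em_R0]
    exact Psub_smul _ (pow_mem qq_mem _) (E_mem_Lat (tri_refl _))
  · refine Sset_of_lt ⟨s, r, ?_⟩ hl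
    exact ⟨by dsimp only; omega, by dsimp only; omega, by dsimp only; omega, by dsimp only; omega⟩

def Zn (z d : R) (n : ℕ) : R := qq ^ (2 * (n : ℤ) * (n - 1)) • zs z d n
def Xn (u2 u3 p1 z d : R) (n : ℕ) : R :=
  qq ^ (2 * (n : ℤ) ^ 2 - n) • xs (qq ^ 2) u2 u3 p1 z d n

theorem Xn_step (hs : KSys (qq ^ 2) u0 u1 u2 u3 p0 p1 z d) (n : ℕ) :
    Xn u2 u3 p1 z d (n + 1) = qq ^ (n + 1) • (u3 * Zn z d (n + 1))
      + qq • -(qq ^ (2 * (n + 1) + 0) • (u2 * (qq ^ (3 * n + 2 * 0 + 0) • (p1 * Zn z d n)))) := by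
  rw [Xn, (xs_zs hs n).1]
  simp only [Zn, mul_smul_comm, smul_smul, smul_sub, smul_neg, ← sub_eq_add_neg]
  have := qq_ne
  simp only [← zpow_natCast, ← zpow_add₀ this, ← zpow_one_add₀ this]
  push_cast
  congr 3 <;> ring

theorem Zn_step (hs : KSys (qq ^ 2) u0 u1 u2 u3 p0 p1 z d) (n : ℕ) :
    Zn z d (n + 2) = qq ^ (n + 1) • (Xn u2 u3 p1 z d (n + 1) * u0)
      + qq • -(qq • (qq ^ (2 * (n + 1) + 0) •
        ((qq ^ (0 + 2 * 0 + 3 * n) • (Xn u2 u3 p1 z d n * p0)) * u1))) := by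
  rw [Zn, (zs_xs hs n).1]
  simp only [Xn, mul_smul_comm, smul_mul_assoc, smul_smul, smul_sub, smul_neg, ← sub_eq_add_neg,
    mul_assoc]
  have := qq_ne
  simp only [← zpow_natCast, ← zpow_add₀ this, ← zpow_one_add₀ this, inv_zpow', ← zpow_mul]
  push_cast
  congr 3 <;> ring

theorem good_ZX (h : KRel (qq ^ 2) u0 u1 u2 u3) (hs : KSys (qq ^ 2) u0 u1 u2 u3 p0 p1 z d)
    (hp1 : p1 = u3 * u1 - qq ^ 2 • (u2 * u2)) (n : ℕ) :
    (Good EE (n, 0, 0, n) (Zn z d n) ∧ Good EE (n + 1, 0, 0, n) (Xn u2 u3 p1 z d n)) ∧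
    Good EE (n + 1, 0, 0, n + 1) (Zn z d (n + 1)) := by
  have stepX : ∀ n, Good EE (n, 0, 0, n) (Zn z d n) → Good EE (n + 1, 0, 0, n + 1) (Zn z d (n + 1)) →
      Good EE (n + 2, 0, 0, n + 1) (Xn u2 u3 p1 z d (n + 1)) := by
    intro n h1 h2
    rw [Xn_step hs]
    refine (good_L3 h2).add (q_mem_Rad (a' := (n + 1, 1, 1, n)) ?_
      (neg_mem (lat_L2 h (lat_P1 h hs hp1 h1.lat))))
    refine Sset_of_lt ⟨1, 1, ?_⟩ (by simp [ht])
    exact ⟨by dsimp only; omega, by dsimp only; omega, by dsimp only; omega, by dsimp only; omega⟩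
  induction n with
  | zero =>
    refine ⟨⟨?_, ?_⟩, ?_⟩
    · have : Zn z d 0 = EE (0, 0, 0, 0) := by simp [Zn, Em, bexp, zs]
      rw [this]; exact good_E _
    · have : Xn u2 u3 p1 z d 0 = EE (0 + 1, 0, 0, 0) := by simp [Xn, Em, bexp, xs]
      rw [this]; exact good_E _
    · have : Zn z d (0 + 1) = EE (0 + 1, 0, 0, 0 + 1) + qq • -(qq • EE (0, 1, 1, 0)) := by
        simp [Zn, Em, bexp, zs, hs.hz, sub_eq_add_neg, smul_smul, pow_two]
      rw [this]
      refine (good_E _).add (q_mem_Rad (a' := (0, 1, 1, 0)) ?_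
        (neg_mem (Psub_smul _ qq_mem (E_mem_Lat (tri_refl _)))))
      refine Sset_of_lt ⟨1, 1, ?_⟩ (by simp [ht])
      simp
  | succ n ih =>
    obtain ⟨⟨h1, h2⟩, h3⟩ := ih
    have h4 := stepX n h1 h3
    refine ⟨⟨h3, h4⟩, ?_⟩
    rw [Zn_step hs]
    refine (good_R0 h4).add (q_mem_Rad (a' := (n + 1, 1, 1, n + 1)) ?_
      (neg_mem (Psub_smul _ qq_mem (lat_R1 h (lat_P0 h hs h2.lat)))))
    refine Sset_of_lt ⟨1, 1, ?_⟩ (by simp [ht])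
    exact ⟨by dsimp only; omega, by dsimp only; omega, by dsimp only; omega, by dsimp only; omega⟩

end part5

section part6

variable {R : Type*} [Ring R] {K : Type*} [Field K] [Algebra K R]
variable {u0 u1 u2 u3 p0 p1 z d : R}

theorem sig_xs {q : K} (hq : q ≠ 0) (h : KRel (q ^ 2) u0 u1 u2 u3) (hs : KSys (q ^ 2) u0 u1 u2 u3 p0 p1 z d)
    (hp1 : p1 = u3 * u1 - q ^ 2 • (u2 * u2))
    (bar : K →+* K) (hbar : bar q = q⁻¹) (σ : R → R)
    (hadd : ∀ x y, σ (x + y) = σ x + σ y) (hmul : ∀ x y, σ (x * y) = σ y * σ x)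
    (hsm : ∀ (c : K) x, σ (c • x) = bar c • σ x)
    (s0 : σ u0 = u0) (s1 : σ u1 = q ^ 2 • u1) (s2 : σ u2 = q ^ 4 • u2) (s3 : σ u3 = q ^ 6 • u3)
    (n : ℕ) :
    σ (xs (q ^ 2) u2 u3 p1 z d n) = (q ^ 2) ^ (n + 3) • xs (q ^ 2) u2 u3 p1 z d n ∧
    σ (xs (q ^ 2) u2 u3 p1 z d (n + 1)) = (q ^ 2) ^ (n + 4) • xs (q ^ 2) u2 u3 p1 z d (n + 1) := by
  have hsub : ∀ x y, σ (x - y) = σ x - σ y := by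
    intro x y
    have : σ x = σ (x - y) + σ y := by rw [← hadd, sub_add_cancel]
    rw [this, add_sub_cancel_right]
  have hb2 : bar (q ^ 2) = (q ^ 2)⁻¹ := by rw [map_pow, hbar, inv_pow]
  have e1 : σ p1 = q ^ 6 • p1 := by
    rw [hp1, hsub, hsm, hmul, hmul, s1, s2, s3, hb2]
    simp only [smul_mul_assoc, mul_smul_comm, h.r13, smul_sub, smul_smul]
    match_scalars <;> field_simp <;> ring
  have e0 : σ p0 = q ^ 2 • p0 := by
    rw [hs.hp0, hsub, hsm, hmul, hmul, s1, s2, s0, hb2]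
    simp only [smul_mul_assoc, mul_smul_comm, h.r02, smul_sub, smul_smul]
    match_scalars <;> field_simp <;> ring
  have ez : σ z = q ^ 4 • z := by
    rw [hs.hz, hsub, hsm, hmul, hmul, s1, s2, s0, s3, hb2]
    simp only [smul_mul_assoc, mul_smul_comm, h.r03, h.r12, smul_sub, smul_smul]
    match_scalars <;> field_simp <;> ring
  have ed : σ d = q ^ 8 • d := by
    conv_lhs => rw [hs.hd]
    rw [hs.hd', hsm, hmul, e1, e0, map_inv₀, hb2]
    simp only [smul_mul_assoc, mul_smul_comm, smul_smul]
    match_scalars <;> field_simp <;> ring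
  induction n with
  | zero =>
    refine ⟨?_, ?_⟩
    · simp only [xs, s3]; congr 1; ring
    · rw [zero_add, xs_one hs]
      have : xs (q ^ 2) u2 u3 p1 z d 1 = u3 * z - q ^ 2 • (u2 * p1) := rfl
      rw [← xs_one hs, this, hsub, hsm, hmul, hmul, s2, s3, ez, e1, hb2, ← this, xs_one hs]
      simp only [smul_mul_assoc, mul_smul_comm, hs.p1u2, smul_sub, smul_smul]
      match_scalars <;> field_simp <;> ring
  | succ n ih =>
    obtain ⟨i1, i2⟩ := ih
    refine ⟨i2, ?_⟩
    have : xs (q ^ 2) u2 u3 p1 z d (n + 2)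
      = xs (q ^ 2) u2 u3 p1 z d (n + 1) * z - xs (q ^ 2) u2 u3 p1 z d n * d := rfl
    rw [show n + 1 + 1 = n + 2 from rfl, (xs_left hs n).1]
    rw [← (xs_left hs n).1, this, hsub, hmul, hmul, i1, i2, ez, ed, ← this, (xs_left hs n).1]
    simp only [smul_mul_assoc, mul_smul_comm, smul_sub, smul_smul]
    match_scalars <;> ring

theorem ad_smul (c k : K) (A x : R) :
    (c • A) * (k • x) - (k • x) * (c • A) = (c * k) • (A * x - x * A) := by
  rw [smul_mul_smul_comm, smul_mul_smul_comm, smul_sub, mul_comm k c]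

end part6

section part7

theorem qq_facts : (qq ^ 2 + 1 + (qq ^ 2)⁻¹ ≠ 0) ∧ (qq ^ 2 + (qq ^ 2)⁻¹ ≠ 0) := by
  have hq := qq_ne
  have key : ∀ p : Polynomial ℤ, p ≠ 0 → Polynomial.eval₂ (Int.castRingHom F) qq p ≠ 0 := by
    intro p hp h
    exact hp (eval_qq_inj (h.trans (Polynomial.eval₂_zero _ _).symm))
  constructor
  · intro h
    have h1 : qq ^ 4 + qq ^ 2 + 1 = 0 := by
      have := congrArg (fun x => x * qq ^ 2) h
      simp only [zero_mul, add_mul, inv_mul_cancel₀ (pow_ne_zero 2 hq)] at this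
      rw [← this]; ring
    refine key (Polynomial.X ^ 4 + Polynomial.X ^ 2 + 1) ?_ (by simpa using h1)
    intro h
    have := congrArg (Polynomial.eval 0) h
    simp at this
  · intro h
    have h1 : qq ^ 4 + 1 = 0 := by
      have := congrArg (fun x => x * qq ^ 2) h
      simp only [zero_mul, add_mul, inv_mul_cancel₀ (pow_ne_zero 2 hq)] at this
      rw [← this]; ring
    refine key (Polynomial.X ^ 4 + 1) ?_ (by simpa using h1)
    intro h
    have := congrArg (Polynomial.eval 0) h
    simp at this

theorem KRelU : KRel (qq ^ 2) u0 u1 u2 u3 := by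
  obtain ⟨f1, f2⟩ := qq_facts
  have b3 : box3 = qq ^ 2 + 1 + (qq ^ 2)⁻¹ := by rw [box3, inv_pow]
  have hr := RingQuot.mkAlgHom_rel F SerreRel.rel1
  have hs := RingQuot.mkAlgHom_rel F SerreRel.rel2
  simp only [map_add, map_sub, map_mul, map_smul, map_pow, map_zero] at hr hs
  rw [b3] at hr hs
  have := KRel.of_serre (qq ^ 2) (pow_ne_zero 2 qq_ne) f1 f2 E1 E2
    (E2 * E1 - (qq ^ 2)⁻¹ • (E1 * E2)) _ _ _ hr hs rfl rfl rfl rfl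
    (((1 - (qq⁻¹) ^ 2)⁻¹) ^ 2 * (qq + qq⁻¹)⁻¹)
  have hA : Aelt = (qq + qq⁻¹)⁻¹ • (E2 * E1 - (qq ^ 2)⁻¹ • (E1 * E2)) := by rw [Aelt, inv_pow]
  generalize E2 * E1 - (qq ^ 2)⁻¹ • (E1 * E2) = A' at hA this
  have e1 : v1 = (qq + qq⁻¹)⁻¹ • (A' * E1 - E1 * A') := by
    have := ad_smul (qq + qq⁻¹)⁻¹ 1 A' E1
    rw [one_smul, mul_one, ← hA] at this
    exact this
  have e2 : v2 = ((qq + qq⁻¹)⁻¹ * (qq + qq⁻¹)⁻¹) •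
      (A' * (A' * E1 - E1 * A') - (A' * E1 - E1 * A') * A') := by
    rw [v2, e1, hA]; exact ad_smul (K := F) (R := U) _ _ _ _
  have e3 : v3 = ((qq + qq⁻¹)⁻¹ * ((qq + qq⁻¹)⁻¹ * (qq + qq⁻¹)⁻¹)) •
      (A' * (A' * (A' * E1 - E1 * A') - (A' * E1 - E1 * A') * A') -
        (A' * (A' * E1 - E1 * A') - (A' * E1 - E1 * A') * A') * A') := by
    rw [v3, e2, hA]; exact ad_smul (K := F) (R := U) _ _ _ _
  convert this using 1
  · rfl
  · rw [u1, e1, smul_smul]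
  · rw [u2, e2, smul_smul]; congr 1; ring
  · rw [u3, e3, smul_smul]; congr 1; ring

theorem KRelS : KRel (qq ^ 2) us0 us1 us2 us3 :=
  ⟨Subtype.ext KRelU.r01, Subtype.ext KRelU.r12, Subtype.ext KRelU.r23, Subtype.ext KRelU.r02,
    Subtype.ext KRelU.r13, Subtype.ext KRelU.r03⟩

theorem Ee_eq : Ee = Em us0 us1 us2 us3 := rfl

theorem Ee_li (hPBW : LinearIndependent F mon) : LinearIndependent F Ee :=
  hPBW.units_smul (fun a => Units.mk0 (qq ^ bexp a) (pow_ne_zero _ qq_ne))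

theorem good_of_cond1 {B : Idx → Sgen} {a : Idx} (h : cond1 B a) : Good Ee a (B a) := by
  obtain ⟨φ, h1, h2⟩ := h
  unfold Good
  rw [h2]
  refine sum_mem fun b hb => ?_
  dsimp only
  rw [mul_comm, ← smul_smul]
  exact Psub_smul _ ⟨φ b, rfl⟩ (qE_mem_Rad (h1 hb))

theorem X_eq {R : Type*} [Ring R] [Algebra F R] {u0 u1 u2 u3 p0 p1 z d : R}
    (h : KRel (qq ^ 2) u0 u1 u2 u3) (hs : KSys (qq ^ 2) u0 u1 u2 u3 p0 p1 z d)
    (hp1 : p1 = u3 * u1 - qq ^ 2 • (u2 * u2))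
    (hE : LinearIndependent F (Em u0 u1 u2 u3))
    (bar : F →+* F) (hbar : bar qq = qq⁻¹) (σ : R → R)
    (hadd : ∀ x y, σ (x + y) = σ x + σ y) (hmul : ∀ x y, σ (x * y) = σ y * σ x)
    (hsm : ∀ (c : F) x, σ (c • x) = bar c • σ x)
    (s0 : σ u0 = u0) (s1 : σ u1 = qq ^ 2 • u1) (s2 : σ u2 = qq ^ 4 • u2) (s3 : σ u3 = qq ^ 6 • u3)
    (B : Idx → R) (hB : ∀ a, Good (Em u0 u1 u2 u3) a (B a))
    (hσB : ∀ a, σ (B a) = qq ^ (-Nnum a) • B a) (n : ℕ) :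
    B (n + 1, 0, 0, n) = Xn u2 u3 p1 z d n := by
  have hx : σ (Xn u2 u3 p1 z d n) = qq ^ (-Nnum (n + 1, 0, 0, n)) • Xn u2 u3 p1 z d n := by
    have hq := qq_ne
    rw [Xn, hsm, (sig_xs hq h hs hp1 bar hbar σ hadd hmul hsm s0 s1 s2 s3 n).1, smul_smul, smul_smul]
    congr 1
    rw [map_zpow₀, hbar, inv_zpow', ← pow_mul, ← zpow_natCast, ← zpow_add₀ hq, ← zpow_add₀ hq]
    congr 1
    simp only [Nnum]
    push_cast
    ring
  exact (uniq hE bar hbar σ hadd hsm B hB hσB (good_ZX h hs hp1 n).1.2 hx).symm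

theorem B_eq (bar : F →+* F) (σ : Sgen → Sgen) (B : Idx → Sgen)
    (hPBW : LinearIndependent F mon) (hσ : SigmaHyp bar σ) (hB : DCB bar σ B) {p0 p1 z d : Sgen}
    (hs : KSys (qq ^ 2) us0 us1 us2 us3 p0 p1 z d)
    (hp1 : p1 = us3 * us1 - qq ^ 2 • (us2 * us2)) (n : ℕ) :
    B (n + 1, 0, 0, n) = Xn us2 us3 p1 z d n := by
  obtain ⟨hbar, -, hadd, hmul, hsm, s0, s1, s2, s3⟩ := hσ
  have hE := Ee_li hPBW
  rw [Ee_eq] at hE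
  have hG : ∀ a, Good (Em us0 us1 us2 us3) a (B a) := fun a => by
    rw [← Ee_eq]; exact good_of_cond1 (hB a).1
  have hσB : ∀ a, σ (B a) = qq ^ (-Nnum a) • B a := fun a => (hB a).2
  exact X_eq KRelS hs hp1 hE bar hbar σ hadd hmul hsm s0 s1 s2 s3 B hG hσB n

end part7

/-- For every integer `n ≥ 2` the quantum exchange relation
`B[n+1,0,0,n]·B[n−1,0,0,n−2] = q² · B[n,0,0,n−1]² + q^{2n²−6n+8} p₁^{n+1} p₀^{n−2}` holds. -/
theorem stmt16 (bar : F →+* F) (σ : Sgen → Sgen) (B : Idx → Sgen)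
    (hPBW : LinearIndependent F mon) (hσ : SigmaHyp bar σ) (hB : DCB bar σ B) (n : ℕ) (hn : 2 ≤ n) :
    Bz B ((n : ℤ) + 1, 0, 0, (n : ℤ)) * Bz B ((n : ℤ) - 1, 0, 0, (n : ℤ) - 2)
        = qq ^ 2 • (Bz B ((n : ℤ), 0, 0, (n : ℤ) - 1)) ^ 2
          + qq ^ (2 * (n : ℤ) ^ 2 - 6 * (n : ℤ) + 8) • (ps1 ^ (n + 1) * ps0 ^ (n - 2)) := by
  obtain ⟨m, rfl⟩ : ∃ m, n = m + 2 := ⟨n - 2, by omega⟩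
  have hq := qq_ne
  have hp1 : ps1 = us3 * us1 - qq ^ 2 • (us2 * us2) := by rw [ps1, pow_two us2]
  have hp0 : ps0 = us2 * us0 - qq ^ 2 • (us1 * us1) := by rw [ps0, pow_two us1]
  have hs := KRelS.sys (pow_ne_zero 2 qq_ne) hp0 hp1 rfl rfl
  have hz : ∀ (x y : ℤ) (k : ℕ), x = k + 1 → y = k →
      Bz B (x, 0, 0, y) = B (k + 1, 0, 0, k) := by
    rintro x y k rfl rfl
    rw [Bz, if_pos ⟨by dsimp only; omega, le_rfl, le_rfl, by dsimp only; omega⟩]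
    congr 1
  rw [hz _ _ (m + 2) rfl rfl, hz _ _ m (by push_cast; ring) (by push_cast; ring),
    hz _ _ (m + 1) (by push_cast; ring) (by push_cast; ring),
    B_eq bar σ B hPBW hσ hB hs hp1, B_eq bar σ B hPBW hσ hB hs hp1,
    B_eq bar σ B hPBW hσ hB hs hp1]
  have hw := xs_w hs m
  rw [sub_eq_iff_eq_add] at hw
  simp only [Xn, pow_two (_ • xs _ _ _ _ _ _ _), smul_mul_smul_comm]
  rw [hw, smul_add, smul_smul, smul_smul, smul_smul, add_comm, Nat.add_sub_cancel]
  simp only [← zpow_natCast, ← zpow_add₀ hq, inv_zpow', ← zpow_mul, ← zpow_neg]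
  congr 2
  · congr 1; push_cast; ring
  · congr 1; push_cast; ring
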